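/- arXiv:1205.0348 — 3 statements merged into one kernel-verified Lean document; each statement's English description precedes it below -/
import Mathlib

section
/- Let s > 0 and c₁, c₂ ∈ ℝ, and let a ∈ ℝ satisfy a² + (2c₁ − 1)a − c₂ = 0 and σ := a + c₁ > −1/2. Let H = L²((0,∞), ρ^{2c₁} dρ) be the complex L² space of (0,∞) for the measure with density ρ ↦ ρ^{2c₁} with respect to Lebesgue measure, and let 𝒟 = { ρ ↦ ρ^a φ(ρ) : φ is the restriction to (0,∞) of an even Schwartz function on ℝ }. Define P on 𝒟 by (Pu)(ρ) = −u''(ρ) + s²ρ²u(ρ) − 2c₁ρ^{−1}u'(ρ) + c₂ρ^{−2}u(ρ). Then: (i) 𝒟 is a dense subspace of H, P maps 𝒟 into H and is symmetric, and P is essentially self-adjoint in H (its closure is a self-adjoint operator); (ii) there is a Hilbert basis (χ_k)_{k∈ℕ} of H with χ_k ∈ 𝒟 and Pχ_k = (4k + 1 + 2σ)s · χ_k for every k ∈ ℕ; moreover every eigenvalue of the closure of P is of the form (4k + 1 + 2σ)s for some k ∈ ℕ and has multiplicity one. -/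
open MeasureTheory
open scoped InnerProductSpace

/-- The measure `ρ^{2c₁} dρ` on `(0,∞)`. -/
noncomputable def radMeasure (c₁ : ℝ) : Measure ℝ :=
  (volume.restrict (Set.Ioi 0)).withDensity fun ρ => ENNReal.ofReal (ρ ^ (2 * c₁))

/-- The perturbed harmonic oscillator
`(Pu)(ρ) = -u''(ρ) + s²ρ²u(ρ) - 2c₁ρ⁻¹u'(ρ) + c₂ρ⁻²u(ρ)`. -/
noncomputable def Pop (s c₁ c₂ : ℝ) (f : ℝ → ℂ) : ℝ → ℂ := fun ρ =>
  -(deriv (deriv f) ρ) + (s ^ 2 * ρ ^ 2 : ℝ) * f ρ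
    - (2 * c₁ / ρ : ℝ) * deriv f ρ + (c₂ / ρ ^ 2 : ℝ) * f ρ

/-- An even Schwartz function. -/
def IsEvenSchwartz (φ : SchwartzMap ℝ ℂ) : Prop := ∀ x : ℝ, φ (-x) = φ x

/-- The function `ρ ↦ ρ^a φ(ρ)`. -/
noncomputable def powSchwartz (a : ℝ) (φ : SchwartzMap ℝ ℂ) : ℝ → ℂ :=
  fun ρ => ((ρ ^ a : ℝ) : ℂ) * φ ρ

/-- The domain `𝒟 = ρ^a 𝒮_{ev,+}` inside `L²((0,∞), ρ^{2c₁}dρ)`. -/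
def Dset (a c₁ : ℝ) : Set (Lp ℂ 2 (radMeasure c₁)) :=
  {u | ∃ φ : SchwartzMap ℝ ℂ, IsEvenSchwartz φ ∧
    (u : ℝ → ℂ) =ᵐ[radMeasure c₁] powSchwartz a φ}


section AbstractOp
variable {H : Type*} [NormedAddCommGroup H] [InnerProductSpace ℂ H] [CompleteSpace H]

theorem abs_inner_adj (T : H →ₗ.[ℂ] H) (hd : Dense (T.domain : Set H))
    (χ : HilbertBasis ℕ ℂ H) (hχ : ∀ k, χ k ∈ T.domain) (l : ℕ → ℝ)
    (hl : ∀ k, T ⟨χ k, hχ k⟩ = (l k : ℂ) • χ k) (x : T.adjoint.domain) (k : ℕ) :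
    ⟪χ k, T.adjoint x⟫_ℂ = l k * ⟪χ k, (x : H)⟫_ℂ := by
  have h := (LinearPMap.adjoint_isFormalAdjoint hd).symm ⟨χ k, hχ k⟩ x
  rw [hl, inner_smul_left] at h
  simpa using h.symm

theorem abs_adj_eq_closure (T : H →ₗ.[ℂ] H) (hd : Dense (T.domain : Set H))
    (hsym : ∀ x y : T.domain, ⟪T x, (y : H)⟫_ℂ = ⟪(x : H), T y⟫_ℂ)
    (χ : HilbertBasis ℕ ℂ H) (hχ : ∀ k, χ k ∈ T.domain) (l : ℕ → ℝ)
    (hl : ∀ k, T ⟨χ k, hχ k⟩ = (l k : ℂ) • χ k) : T.closure = T.adjoint := by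
  have hle : T ≤ T.adjoint := LinearPMap.IsFormalAdjoint.le_adjoint hd hsym
  have hclos : T.adjoint.IsClosed := LinearPMap.adjoint_isClosed hd
  have hcl : T.IsClosable := hclos.isClosable.leIsClosable hle
  apply LinearPMap.eq_of_eq_graph
  rw [← hcl.graph_closure_eq_closure_graph]
  apply le_antisymm
  · exact Submodule.topologicalClosure_minimal _ (LinearPMap.le_graph_of_le hle) hclos
  · rintro ⟨x, y⟩ hxy
    rw [LinearPMap.mem_graph_iff] at hxy
    obtain ⟨x', rfl, rfl⟩ := hxy
    have h1 := χ.hasSum_repr (x' : H)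
    have h2 := χ.hasSum_repr (T.adjoint x')
    have h3 := h1.prodMk h2
    change _ ∈ closure (T.graph : Set (H × H))
    refine mem_closure_of_tendsto h3 (Filter.Eventually.of_forall fun s => ?_)
    refine Submodule.sum_mem _ fun k _ => ?_
    rw [χ.repr_apply_apply, χ.repr_apply_apply, abs_inner_adj T hd χ hχ l hl]
    have := T.graph.smul_mem (⟪χ k, (x' : H)⟫_ℂ) (T.mem_graph ⟨χ k, hχ k⟩)
    rw [hl] at this
    rw [Prod.smul_mk, smul_smul] at this
    rw [mul_comm]
    exact this

theorem abs_main (T : H →ₗ.[ℂ] H) (hd : Dense (T.domain : Set H))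
    (hsym : ∀ x y : T.domain, ⟪T x, (y : H)⟫_ℂ = ⟪(x : H), T y⟫_ℂ)
    (χ : HilbertBasis ℕ ℂ H) (hχ : ∀ k, χ k ∈ T.domain) (l : ℕ → ℝ)
    (hl : ∀ k, T ⟨χ k, hχ k⟩ = (l k : ℂ) • χ k) (hinj : Function.Injective l) :
    T.closure.adjoint = T.closure ∧
      (∀ μeig : ℂ,
        (∃ (u : H) (hu : u ∈ T.closure.domain), u ≠ 0 ∧ T.closure ⟨u, hu⟩ = μeig • u) →
        (∃ k : ℕ, μeig = ((l k : ℝ) : ℂ)) ∧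
        (∀ (u v : H) (hu : u ∈ T.closure.domain)
            (hv : v ∈ T.closure.domain), u ≠ 0 →
            T.closure ⟨u, hu⟩ = μeig • u → T.closure ⟨v, hv⟩ = μeig • v →
            ∃ z : ℂ, v = z • u)) := by
  have hc := abs_adj_eq_closure T hd hsym χ hχ l hl
  have hin := abs_inner_adj T hd χ hχ l hl
  have hcd : Dense (T.closure.domain : Set H) := hd.mono T.le_closure.1
  constructor
  · apply le_antisymm
    · conv_rhs => rw [hc]
      apply LinearPMap.IsFormalAdjoint.le_adjoint hd
      refine LinearPMap.IsFormalAdjoint.symm fun x y => ?_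
      have h := LinearPMap.adjoint_isFormalAdjoint hcd x ⟨y, T.le_closure.1 y.2⟩
      rw [h]
      congr 1
      exact (T.le_closure.2 rfl).symm
    · apply LinearPMap.IsFormalAdjoint.le_adjoint hcd
      rw [hc]
      intro x y
      rw [← χ.tsum_inner_mul_inner, ← χ.tsum_inner_mul_inner]
      congr 1
      ext k
      rw [hin y, ← inner_conj_symm, hin x, ← inner_conj_symm (x : H) (χ k)]
      simp
      ring
  · rw [hc]
    have key : ∀ (u : H) (hu : u ∈ T.adjoint.domain) (m : ℂ), T.adjoint ⟨u, hu⟩ = m • u →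
        ∀ k, m ≠ l k → ⟪χ k, u⟫_ℂ = 0 := by
      intro u hu m h k hk
      have := hin ⟨u, hu⟩ k
      rw [h, inner_smul_right] at this
      have h2 : (m - l k) * ⟪χ k, u⟫_ℂ = 0 := by linear_combination this
      exact (mul_eq_zero.1 h2).resolve_left (sub_ne_zero.2 hk)
    have key2 : ∀ u : H, (∀ k, ⟪χ k, u⟫_ℂ = 0) → u = 0 := by
      intro u h
      have := χ.hasSum_repr u
      simp only [χ.repr_apply_apply, h, zero_smul] at this
      exact this.unique hasSum_zero
    rintro m ⟨u, hu, hu0, hum⟩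
    have hk : ∃ k : ℕ, m = ((l k : ℝ) : ℂ) := by
      by_contra! hne
      exact hu0 (key2 u fun k => key u hu m hum k (hne k))
    refine ⟨hk, ?_⟩
    obtain ⟨k, rfl⟩ := hk
    have key3 : ∀ (u : H) (hu : u ∈ T.adjoint.domain), T.adjoint ⟨u, hu⟩ = ((l k : ℝ) : ℂ) • u →
        u = ⟪χ k, u⟫_ℂ • χ k := by
      intro u hu h
      have h1 := χ.hasSum_repr u
      simp only [χ.repr_apply_apply] at h1
      refine h1.unique (hasSum_single k fun j hj => ?_)
      rw [key u hu _ h j, zero_smul]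
      intro h; exact hj (hinj (by exact_mod_cast h.symm))
    intro u v hu hv hu0 h1 h2
    have e1 := key3 u hu h1
    have e2 := key3 v hv h2
    have : ⟪χ k, u⟫_ℂ ≠ 0 := fun h => hu0 (by rw [e1, h, zero_smul])
    refine ⟨⟪χ k, v⟫_ℂ / ⟪χ k, u⟫_ℂ, ?_⟩
    calc v = ⟪χ k, v⟫_ℂ • χ k := e2
      _ = (⟪χ k, v⟫_ℂ / ⟪χ k, u⟫_ℂ) • (⟪χ k, u⟫_ℂ • χ k) := by
        rw [smul_smul, div_mul_cancel₀ _ this]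
      _ = _ := by rw [← e1]
end AbstractOp


section Poly
open Polynomial

/-- The Laguerre type operator on polynomials. -/
noncomputable def lagOp (s σ : ℝ) (q : ℂ[X]) : ℂ[X] :=
  -(4 : ℂ[X]) * X * derivative (derivative q) + (C (4 * s : ℂ) * X - C (2 + 4 * σ : ℂ)) * derivative q
    + C ((1 + 2 * σ) * s : ℂ) * q

theorem lagOp_add (s σ : ℝ) (p q : ℂ[X]) : lagOp s σ (p + q) = lagOp s σ p + lagOp s σ q := by
  simp only [lagOp, derivative_add]; ring

theorem lagOp_C_mul (s σ : ℝ) (c : ℂ) (q : ℂ[X]) : lagOp s σ (C c * q) = C c * lagOp s σ q := by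
  simp only [lagOp, derivative_C_mul]; ring

theorem lagOp_X_pow_zero (s σ : ℝ) :
    lagOp s σ (X ^ 0) = C ((1 + 2 * σ) * s : ℂ) * X ^ 0 := by
  simp [lagOp]

theorem lagOp_X_pow (s σ : ℝ) (j : ℕ) :
    lagOp s σ (X ^ (j + 1)) = C ((4 * (j + 1 : ℕ) + 1 + 2 * σ) * s : ℂ) * X ^ (j + 1)
      - C (2 * (j + 1) * (2 * j + 1 + 2 * σ) : ℂ) * X ^ j := by
  rcases j with _ | j
  · have h4 : (C (4 : ℂ) : ℂ[X]) = 4 := map_ofNat C 4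
    have h2 : (C (2 : ℂ) : ℂ[X]) = 2 := map_ofNat C 2
    simp [lagOp, h4, h2]; ring
  · simp only [lagOp, derivative_X_pow, derivative_C_mul, derivative_mul, Nat.add_sub_cancel, map_mul, map_add, map_natCast, map_ofNat, map_one, derivative_natCast, Nat.cast_add, Nat.cast_one, derivative_add, derivative_one]
    ring

theorem lag_solve (s σ : ℝ) (hs : 0 < s) (k : ℕ) : ∀ j < k, ∃ y : ℂ[X], y.degree < k ∧
    lagOp s σ y - C ((4 * k + 1 + 2 * σ) * s : ℂ) * y = X ^ j := by
  have hne : ∀ j < k, ((4 * j + 1 + 2 * σ) * s : ℂ) - ((4 * k + 1 + 2 * σ) * s : ℂ) ≠ 0 := by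
    intro j hj
    have hs' : (s : ℂ) ≠ 0 := by exact_mod_cast hs.ne'
    have : ((4 * j + 1 + 2 * σ) * s : ℂ) - ((4 * k + 1 + 2 * σ) * s : ℂ) = 4 * (j - k) * s := by ring
    rw [this]
    have h2 : (j : ℂ) - k ≠ 0 := sub_ne_zero.2 (by exact_mod_cast hj.ne)
    simp [h2, hs']
  intro j
  induction j with
  | zero =>
    intro hj
    have h := hne 0 hj
    refine ⟨C (((4 * (0 : ℕ) + 1 + 2 * σ) * s : ℂ) - ((4 * k + 1 + 2 * σ) * s : ℂ))⁻¹ * X ^ 0, ?_, ?_⟩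
    · refine lt_of_le_of_lt (degree_C_mul_X_pow_le _ _) (by exact_mod_cast hj)
    · rw [lagOp_C_mul, lagOp_X_pow_zero]
      set c := ((4 * (0 : ℕ) + 1 + 2 * σ) * s : ℂ) - ((4 * k + 1 + 2 * σ) * s : ℂ)
      have e : C ((1 + 2 * σ) * s : ℂ) = C c + C ((4 * k + 1 + 2 * σ) * s : ℂ) := by
        rw [← C_add]; congr 1; simp [c]
      have e2 : C c⁻¹ * C c = (1 : ℂ[X]) := by rw [← C_mul, inv_mul_cancel₀ h, C_1]
      rw [e]
      linear_combination (X ^ 0) * e2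
  | succ j ih =>
    intro hj
    obtain ⟨y, hy, hy2⟩ := ih (by omega)
    have h := hne (j + 1) hj
    refine ⟨C (((4 * (j + 1 : ℕ) + 1 + 2 * σ) * s : ℂ) - ((4 * k + 1 + 2 * σ) * s : ℂ))⁻¹ *
      (X ^ (j + 1) + C (2 * (j + 1) * (2 * j + 1 + 2 * σ) : ℂ) * y), ?_, ?_⟩
    · rw [degree_C_mul (inv_ne_zero h)]
      refine lt_of_le_of_lt (degree_add_le _ _) (max_lt ?_ ?_)
      · rw [degree_X_pow]; exact_mod_cast hj
      · refine lt_of_le_of_lt (by rw [← smul_eq_C_mul]; exact degree_smul_le _ _) hy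
    · rw [lagOp_C_mul, lagOp_add, lagOp_C_mul, lagOp_X_pow]
      set c := ((4 * (j + 1 : ℕ) + 1 + 2 * σ) * s : ℂ) - ((4 * k + 1 + 2 * σ) * s : ℂ)
      have e : C ((4 * (j + 1 : ℕ) + 1 + 2 * σ) * s : ℂ) = C c + C ((4 * k + 1 + 2 * σ) * s : ℂ) := by
        rw [← C_add]; congr 1; simp [c]
      have e2 : C c⁻¹ * C c = (1 : ℂ[X]) := by rw [← C_mul, inv_mul_cancel₀ h, C_1]
      rw [e]
      linear_combination (X ^ (j + 1)) * e2 + C c⁻¹ * C (2 * (j + 1) * (2 * j + 1 + 2 * σ) : ℂ) * hy2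

theorem lag_eigen (s σ : ℝ) (hs : 0 < s) (k : ℕ) : ∃ q : ℂ[X], q.degree = k ∧
    lagOp s σ q = C ((4 * k + 1 + 2 * σ) * s : ℂ) * q := by
  rcases k with _ | k
  · exact ⟨X ^ 0, by simp, by rw [lagOp_X_pow_zero]; simp⟩
  · obtain ⟨y, hy, hy2⟩ := lag_solve s σ hs (k + 1) k (by omega)
    refine ⟨X ^ (k + 1) + C (2 * (k + 1) * (2 * k + 1 + 2 * σ) : ℂ) * y, ?_, ?_⟩
    · rw [degree_add_eq_left_of_degree_lt, degree_X_pow]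
      rw [degree_X_pow]
      exact lt_of_le_of_lt (by rw [← smul_eq_C_mul]; exact degree_smul_le _ _) hy
    · rw [lagOp_add, lagOp_C_mul, lagOp_X_pow]
      linear_combination C (2 * (k + 1) * (2 * k + 1 + 2 * σ) : ℂ) * hy2

/-- Gaussian derivative on polynomials. -/
noncomputable def gD (s : ℝ) (p : ℂ[X]) : ℂ[X] := derivative p - C (s : ℂ) * X * p

/-- polynomial times Gaussian. -/
noncomputable def gF (s : ℝ) (p : ℂ[X]) : ℝ → ℂ := fun x =>
  p.eval (x : ℂ) * ((Real.exp (-(s / 2) * x ^ 2) : ℝ) : ℂ)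

theorem gF_hasDerivAt (s : ℝ) (p : ℂ[X]) (x : ℝ) : HasDerivAt (gF s p) (gF s (gD s p) x) x := by
  have h1 : HasDerivAt (fun x : ℝ => p.eval (x : ℂ)) (p.derivative.eval (x : ℂ)) x :=
    (p.hasDerivAt (x : ℂ)).comp_ofReal
  have h2 : HasDerivAt (fun x : ℝ => Real.exp (-(s / 2) * x ^ 2))
      (Real.exp (-(s / 2) * x ^ 2) * (-(s / 2) * (2 * x))) x := by
    have := ((hasDerivAt_pow 2 x).const_mul (-(s / 2))).exp
    simpa using this
  have h3 := h1.mul h2.ofReal_comp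
  unfold gF
  convert! h3 using 1
  simp only [gD, eval_sub, eval_mul, eval_C, eval_X]
  push_cast
  ring

theorem gF_iteratedDeriv (s : ℝ) (n : ℕ) : ∀ p : ℂ[X],
    iteratedDeriv n (gF s p) = gF s ((gD s)^[n] p) := by
  induction n with
  | zero => intro p; simp
  | succ n ih =>
    intro p
    rw [iteratedDeriv_succ', funext fun x => (gF_hasDerivAt s p x).deriv, Function.iterate_succ_apply, ← ih]

theorem gF_bdd_pow (s : ℝ) (hs : 0 < s) (m : ℕ) :
    ∃ C : ℝ, ∀ x : ℝ, |x| ^ m * Real.exp (-(s / 2) * x ^ 2) ≤ C := by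
  refine ⟨1 + m.factorial / (s / 2) ^ m, fun x => ?_⟩
  have h1 : |x| ^ m ≤ 1 + x ^ (2 * m) := by
    have : x ^ (2 * m) = (|x| ^ m) ^ 2 := by rw [← pow_mul, mul_comm m 2, pow_mul, pow_mul, sq_abs]
    rw [this]; nlinarith [sq_nonneg (|x| ^ m - 1), sq_nonneg (|x| ^ m)]
  have h2 : (s / 2 * x ^ 2) ^ m / m.factorial ≤ Real.exp (s / 2 * x ^ 2) :=
    Real.pow_div_factorial_le_exp _ (by positivity) m
  have h3 : Real.exp (-(s / 2) * x ^ 2) ≤ 1 := by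
    rw [Real.exp_le_one_iff]; nlinarith [sq_nonneg x]
  have h4 : x ^ (2 * m) * Real.exp (-(s / 2) * x ^ 2) ≤ m.factorial / (s / 2) ^ m := by
    rw [neg_mul, Real.exp_neg, ← div_eq_mul_inv, div_le_div_iff₀ (Real.exp_pos _) (by positivity)]
    rw [div_le_iff₀ (by positivity), mul_pow, ← pow_mul] at h2
    linarith
  have := mul_le_mul_of_nonneg_right h1 (Real.exp_pos (-(s / 2) * x ^ 2)).le
  linarith

theorem gF_bdd (s : ℝ) (hs : 0 < s) (p : ℂ[X]) (k : ℕ) :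
    ∃ C : ℝ, ∀ x : ℝ, |x| ^ k * ‖gF s p x‖ ≤ C := by
  induction p using Polynomial.induction_on' with
  | add p q hp hq =>
    obtain ⟨C1, h1⟩ := hp
    obtain ⟨C2, h2⟩ := hq
    refine ⟨C1 + C2, fun x => ?_⟩
    have : gF s (p + q) x = gF s p x + gF s q x := by simp [gF, add_mul]
    rw [this]
    refine le_trans (mul_le_mul_of_nonneg_left (norm_add_le _ _) (by positivity)) ?_
    rw [mul_add]
    exact add_le_add (h1 x) (h2 x)
  | monomial n a =>
    obtain ⟨C, h⟩ := gF_bdd_pow s hs (k + n)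
    refine ⟨‖a‖ * C, fun x => ?_⟩
    have := mul_le_mul_of_nonneg_left (h x) (norm_nonneg a)
    refine le_trans (le_of_eq ?_) this
    simp only [gF, eval_monomial, norm_mul, norm_pow, Complex.norm_real, Real.norm_eq_abs, Real.abs_exp]
    ring

/-- polynomial times Gaussian as a Schwartz function. -/
noncomputable def gS (s : ℝ) (hs : 0 < s) (p : ℂ[X]) : SchwartzMap ℝ ℂ where
  toFun := gF s p
  smooth' := by
    have h : ContDiff ℝ ⊤ (fun x : ℝ => p.eval (x : ℂ)) := by
      have : (fun x : ℝ => p.eval (x : ℂ)) = fun x : ℝ => ∑ i ∈ p.support, p.coeff i * (Complex.ofRealCLM x) ^ i := by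
        ext x; simp [Polynomial.eval_eq_sum, Polynomial.sum]
      rw [this]; fun_prop
    have h2 : ContDiff ℝ ⊤ (fun x : ℝ => Complex.ofRealCLM (Real.exp (-(s / 2) * x ^ 2))) := by
      fun_prop
    exact (h.mul h2).of_le (by simp)
  decay' := by
    intro k n
    obtain ⟨C, hC⟩ := gF_bdd s hs ((gD s)^[n] p) k
    refine ⟨C, fun x => ?_⟩
    rw [norm_iteratedFDeriv_eq_norm_iteratedDeriv, gF_iteratedDeriv, Real.norm_eq_abs]
    exact hC x

theorem gS_apply (s : ℝ) (hs : 0 < s) (p : ℂ[X]) (x : ℝ) : gS s hs p x =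
  p.eval (x : ℂ) * ((Real.exp (-(s / 2) * x ^ 2) : ℝ) : ℂ) := rfl

theorem gS_deriv (s : ℝ) (hs : 0 < s) (p : ℂ[X]) : deriv (gS s hs p) = gS s hs (gD s p) :=
  funext fun x => (gF_hasDerivAt s p x).deriv

theorem gD_lag (s σ : ℝ) (q : ℂ[X]) :
    - X * gD s (gD s (expand ℂ 2 q)) - C (2 * σ : ℂ) * gD s (expand ℂ 2 q)
      + C (s ^ 2 : ℂ) * X ^ 3 * expand ℂ 2 q = X * expand ℂ 2 (lagOp s σ q) := by
  have h1 : derivative (expand ℂ 2 q) = 2 * X * expand ℂ 2 (derivative q) := by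
    rw [derivative_expand]; simp; ring
  have h2 : derivative (expand ℂ 2 (derivative q)) = 2 * X * expand ℂ 2 (derivative (derivative q)) := by
    rw [derivative_expand]; simp; ring
  simp only [gD, lagOp, derivative_sub, derivative_mul, h1, h2, derivative_C, derivative_X, map_add, map_sub, map_mul, expand_C, expand_X, derivative_ofNat, map_neg, map_ofNat, C_pow, map_one]
  ring
end Poly

section Meas
open Filter Topology Asymptotics Set

theorem rad_meas (c : ℝ) : Measurable fun ρ : ℝ => ENNReal.ofReal (ρ ^ (2 * c)) := by fun_prop

theorem rad_ae_iff (c : ℝ) (p : ℝ → Prop) :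
    (∀ᵐ x ∂radMeasure c, p x) ↔ ∀ᵐ x ∂(volume.restrict (Ioi (0 : ℝ))), p x := by
  rw [radMeasure, ae_withDensity_iff (rad_meas c)]
  apply eventually_congr
  filter_upwards [ae_restrict_mem measurableSet_Ioi] with x hx
  have : 0 < x ^ (2 * c) := Real.rpow_pos_of_pos hx _
  simp [this]

theorem rad_ae_pos (c : ℝ) : ∀ᵐ x ∂radMeasure c, 0 < x := by
  rw [rad_ae_iff]; exact ae_restrict_mem measurableSet_Ioi

theorem rad_integrable_iff (c : ℝ) {E : Type*} [NormedAddCommGroup E] [NormedSpace ℝ E] (g : ℝ → E) :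
    Integrable g (radMeasure c) ↔ IntegrableOn (fun x => (x ^ (2 * c)) • g x) (Ioi (0 : ℝ)) := by
  rw [radMeasure, integrable_withDensity_iff_integrable_smul' (rad_meas c) (by simp)]
  apply integrable_congr
  filter_upwards [ae_restrict_mem measurableSet_Ioi] with x hx
  rw [ENNReal.toReal_ofReal (Real.rpow_nonneg (le_of_lt hx) _)]

theorem rad_integral (c : ℝ) {E : Type*} [NormedAddCommGroup E] [NormedSpace ℝ E] (g : ℝ → E) :
    ∫ x, g x ∂(radMeasure c) = ∫ x in Ioi (0 : ℝ), (x ^ (2 * c)) • g x := by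
  rw [radMeasure, integral_withDensity_eq_integral_toReal_smul (rad_meas c) (by simp)]
  apply integral_congr_ae
  filter_upwards [ae_restrict_mem measurableSet_Ioi] with x hx
  rw [ENNReal.toReal_ofReal (Real.rpow_nonneg (le_of_lt hx) _)]

/-- Functions on the half line, bounded near `0` and rapidly decaying. -/
structure GoodFn (h : ℝ → ℂ) : Prop where
  cont : ContinuousOn h (Ioi 0)
  zero : h =O[𝓝[>] 0] (fun _ => (1 : ℝ))
  top : ∀ r : ℝ, h =O[atTop] (fun x : ℝ => x ^ r)

theorem GoodFn.add {h k : ℝ → ℂ} (hh : GoodFn h) (hk : GoodFn k) : GoodFn (fun x => h x + k x) :=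
  ⟨hh.cont.add hk.cont, hh.zero.add hk.zero, fun r => (hh.top r).add (hk.top r)⟩

theorem GoodFn.const_mul {h : ℝ → ℂ} (hh : GoodFn h) (c : ℂ) : GoodFn (fun x => c * h x) :=
  ⟨continuousOn_const.mul hh.cont, hh.zero.const_mul_left c, fun r => (hh.top r).const_mul_left c⟩

theorem goodFn_integrableOn {g : ℝ → ℂ} (hg : GoodFn g) {b : ℝ} (hb : -1 < b) :
    IntegrableOn (fun x : ℝ => x ^ b * ‖g x‖ ^ 2) (Ioi 0) := by
  have h := mellin_convergent_of_isBigO_scalar (a := b + 2) (b := 0) (f := fun x => ‖g x‖ ^ 2) (s := b + 1)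
    ?_ ?_ (by linarith) ?_ (by linarith)
  · simpa using h
  · exact (hg.cont.norm.pow 2).locallyIntegrableOn measurableSet_Ioi
  · have h1 := ((hg.top (-(b + 2) / 2)).norm_left.pow 2)
    refine h1.congr' EventuallyEq.rfl ?_
    filter_upwards [eventually_gt_atTop 0] with x hx
    rw [← Real.rpow_natCast, ← Real.rpow_mul hx.le]
    congr 1; push_cast; ring
  · simpa using (hg.zero.norm_left.pow 2)

theorem goodFn_memLp {g : ℝ → ℂ} (hg : GoodFn g) {a c₁ : ℝ} (hσ : -1 / 2 < a + c₁) :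
    MemLp (fun ρ : ℝ => ((ρ ^ a : ℝ) : ℂ) * g ρ) 2 (radMeasure c₁) := by
  have hm : AEStronglyMeasurable (fun ρ : ℝ => ((ρ ^ a : ℝ) : ℂ) * g ρ) (radMeasure c₁) := by
    have h1 : AEStronglyMeasurable g (volume.restrict (Ioi 0)) :=
      hg.cont.aestronglyMeasurable measurableSet_Ioi
    have h2 : AEStronglyMeasurable g (radMeasure c₁) :=
      h1.mono_ac (withDensity_absolutelyContinuous _ _)
    exact AEStronglyMeasurable.mul (by fun_prop) h2
  rw [memLp_two_iff_integrable_sq_norm hm, rad_integrable_iff]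
  refine (goodFn_integrableOn hg (b := 2 * (a + c₁)) (by linarith)).congr_fun ?_ measurableSet_Ioi
  intro x hx
  have hx : 0 < x := hx
  simp only [norm_mul, Complex.norm_real, Real.norm_eq_abs, smul_eq_mul, mul_pow, sq_abs]
  rw [← mul_assoc, ← Real.rpow_natCast (x ^ a), ← Real.rpow_mul hx.le, ← Real.rpow_add hx]
  congr 2; push_cast; ring

theorem schwartz_top (φ : SchwartzMap ℝ ℂ) (r : ℝ) : φ =O[atTop] (fun x : ℝ => x ^ r) := by
  have h := (φ.isBigO_cocompact_rpow r).mono atTop_le_cocompact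
  refine h.congr' EventuallyEq.rfl ?_
  filter_upwards [eventually_gt_atTop 0] with x hx
  rw [Real.norm_eq_abs, abs_of_pos hx]

theorem schwartz_zero (φ : SchwartzMap ℝ ℂ) : φ =O[𝓝[>] 0] (fun _ => (1 : ℝ)) :=
  (φ.continuous.continuousAt.tendsto.isBigO_one ℝ).mono nhdsWithin_le_nhds

theorem schwartz_good (φ : SchwartzMap ℝ ℂ) : GoodFn φ :=
  ⟨φ.continuous.continuousOn, schwartz_zero φ, schwartz_top φ⟩

theorem schwartz_good_sq (φ : SchwartzMap ℝ ℂ) : GoodFn (fun x => ((x ^ 2 : ℝ) : ℂ) * φ x) := by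
  refine ⟨by fun_prop, ?_, fun r => ?_⟩
  · refine (ContinuousAt.tendsto (x := (0 : ℝ)) (f := fun x : ℝ => ((x ^ 2 : ℝ) : ℂ) * φ x) ?_).isBigO_one ℝ |>.mono nhdsWithin_le_nhds
    fun_prop
  · have h1 : (fun x : ℝ => ((x ^ 2 : ℝ) : ℂ)) =O[atTop] (fun x : ℝ => x ^ 2) := by
      refine IsBigO.of_bound 1 (Eventually.of_forall fun x => ?_)
      simp
    refine (h1.mul (schwartz_top φ (r - 2))).congr' EventuallyEq.rfl ?_
    filter_upwards [eventually_gt_atTop 0] with x hx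
    rw [← Real.rpow_natCast, ← Real.rpow_add hx]
    congr 1; push_cast; ring

theorem even_deriv_zero (φ : SchwartzMap ℝ ℂ) (hφ : IsEvenSchwartz φ) : deriv φ 0 = 0 := by
  have h2 := deriv_comp_neg (φ : ℝ → ℂ) 0
  have h3 : (fun x => φ (-x)) = φ := funext hφ
  rw [h3, neg_zero] at h2
  have h4 : (2 : ℂ) * deriv φ 0 = 0 := by linear_combination h2
  simpa using h4

/-- The derivative as a Schwartz function. -/
noncomputable abbrev dS : SchwartzMap ℝ ℂ →L[ℂ] SchwartzMap ℝ ℂ := SchwartzMap.derivCLM ℂ ℂ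

theorem dS_hasDerivAt (φ : SchwartzMap ℝ ℂ) (x : ℝ) : HasDerivAt φ (dS φ x) x := φ.hasDerivAt x

theorem even_dS_bigO (φ : SchwartzMap ℝ ℂ) (hφ : IsEvenSchwartz φ) :
    (fun x => dS φ x) =O[𝓝[>] 0] (fun x : ℝ => x) := by
  have h := (dS_hasDerivAt (dS φ) 0).isBigO_sub
  have h0 : dS φ 0 = 0 := even_deriv_zero φ hφ
  simp only [h0, sub_zero] at h
  exact h.mono nhdsWithin_le_nhds

theorem schwartz_good_div (φ : SchwartzMap ℝ ℂ) (hφ : IsEvenSchwartz φ) :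
    GoodFn (fun x => ((x⁻¹ : ℝ) : ℂ) * dS φ x) := by
  refine ⟨?_, ?_, fun r => ?_⟩
  · apply ContinuousOn.mul _ (dS φ).continuous.continuousOn
    apply Complex.continuous_ofReal.comp_continuousOn
    exact continuousOn_inv₀.mono fun x hx => ne_of_gt hx
  · have h1 : (fun x : ℝ => ((x⁻¹ : ℝ) : ℂ)) =O[𝓝[>] 0] (fun x : ℝ => x⁻¹) := by
      refine IsBigO.of_bound 1 (Eventually.of_forall fun x => ?_)
      simp
    refine (h1.mul (even_dS_bigO φ hφ)).congr' EventuallyEq.rfl ?_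
    filter_upwards [self_mem_nhdsWithin] with x hx
    exact inv_mul_cancel₀ (ne_of_gt hx)
  · have h1 : (fun x : ℝ => ((x⁻¹ : ℝ) : ℂ)) =O[atTop] (fun x : ℝ => x⁻¹) := by
      refine IsBigO.of_bound 1 (Eventually.of_forall fun x => ?_)
      simp
    refine (h1.mul (schwartz_top (dS φ) (r + 1))).congr' EventuallyEq.rfl ?_
    filter_upwards [eventually_gt_atTop 0] with x hx
    rw [← Real.rpow_neg_one, ← Real.rpow_add hx]
    congr 1; ring

/-- The conjugated operator. -/
noncomputable def Qop (s σ : ℝ) (φ : SchwartzMap ℝ ℂ) : ℝ → ℂ := fun x =>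
  (-1 : ℂ) * dS (dS φ) x + (-(2 * σ) : ℂ) * (((x⁻¹ : ℝ) : ℂ) * dS φ x)
    + (s ^ 2 : ℂ) * (((x ^ 2 : ℝ) : ℂ) * φ x)

theorem Qop_good (s σ : ℝ) (φ : SchwartzMap ℝ ℂ) (hφ : IsEvenSchwartz φ) : GoodFn (Qop s σ φ) :=
  (((schwartz_good _).const_mul _).add ((schwartz_good_div φ hφ).const_mul _)).add
    ((schwartz_good_sq φ).const_mul _)

theorem Qop_add (s σ : ℝ) (φ ψ : SchwartzMap ℝ ℂ) (x : ℝ) :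
    Qop s σ (φ + ψ) x = Qop s σ φ x + Qop s σ ψ x := by
  simp only [Qop, map_add, _root_.add_apply]; ring

theorem Qop_smul (s σ : ℝ) (c : ℂ) (φ : SchwartzMap ℝ ℂ) (x : ℝ) :
    Qop s σ (c • φ) x = c * Qop s σ φ x := by
  simp only [Qop, map_smul, _root_.smul_apply, smul_eq_mul]; ring

theorem Pop_eq (s c₁ c₂ a : ℝ) (ha : a ^ 2 + (2 * c₁ - 1) * a - c₂ = 0) (φ : SchwartzMap ℝ ℂ)
    (x : ℝ) (hx : 0 < x) : Pop s c₁ c₂ (powSchwartz a φ) x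
      = ((x ^ a : ℝ) : ℂ) * Qop s (a + c₁) φ x := by
  have hp : ∀ (b : ℝ) (ψ : SchwartzMap ℝ ℂ) (y : ℝ), 0 < y → HasDerivAt (powSchwartz b ψ)
      (b * powSchwartz (b - 1) ψ y + powSchwartz b (dS ψ) y) y := by
    intro b ψ y hy
    have h := (Real.hasDerivAt_rpow_const (p := b) (Or.inl hy.ne')).ofReal_comp.mul (dS_hasDerivAt ψ y)
    convert! h using 1
    simp [powSchwartz]; ring
  have h1 : deriv (powSchwartz a φ) x = a * powSchwartz (a - 1) φ x + powSchwartz a (dS φ) x :=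
    (hp a φ x hx).deriv
  have h2 : deriv (deriv (powSchwartz a φ)) x =
      a * ((a - 1 : ℝ) * powSchwartz (a - 1 - 1) φ x + powSchwartz (a - 1) (dS φ) x) +
        (a * powSchwartz (a - 1) (dS φ) x + powSchwartz a (dS (dS φ)) x) := by
    have he : deriv (powSchwartz a φ) =ᶠ[𝓝 x]
        fun y => a * powSchwartz (a - 1) φ y + powSchwartz a (dS φ) y := by
      filter_upwards [lt_mem_nhds hx] with y hy using (hp a φ y hy).deriv
    rw [he.deriv_eq]
    exact (((hp (a - 1) φ x hx).const_mul (a : ℂ)).add (hp a (dS φ) x hx)).deriv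
  have hc : c₂ = a ^ 2 + (2 * c₁ - 1) * a := by linarith
  simp only [Pop, h1, h2, powSchwartz, Qop, Real.rpow_sub_one hx.ne', hc]
  have hx' : (x : ℂ) ≠ 0 := by exact_mod_cast hx.ne'
  push_cast
  field_simp
  ring

theorem rad_cont_eq {c : ℝ} {f g : ℝ → ℂ} (hf : ContinuousOn f (Ioi 0)) (hg : ContinuousOn g (Ioi 0))
    (h : f =ᵐ[radMeasure c] g) : ∀ x : ℝ, 0 < x → f x = g x := by
  have h' : f =ᵐ[volume.restrict (Ioi (0 : ℝ))] g := (rad_ae_iff c _).1 h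
  exact fun x hx => Measure.eqOn_open_of_ae_eq h' isOpen_Ioi hf hg hx

theorem pow_cont (a : ℝ) : ContinuousOn (fun x : ℝ => ((x ^ a : ℝ) : ℂ)) (Ioi 0) := by
  apply Complex.continuous_ofReal.comp_continuousOn
  exact fun x hx => (Real.continuousAt_rpow_const _ _ (Or.inl (ne_of_gt hx))).continuousWithinAt

theorem powSchwartz_inj {a c : ℝ} {f g : ℝ → ℂ} (hf : ContinuousOn f (Ioi 0)) (hg : ContinuousOn g (Ioi 0))
    (h : (fun ρ : ℝ => ((ρ ^ a : ℝ) : ℂ) * f ρ) =ᵐ[radMeasure c] (fun ρ : ℝ => ((ρ ^ a : ℝ) : ℂ) * g ρ)) :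
    ∀ x : ℝ, 0 < x → f x = g x := by
  intro x hx
  have := rad_cont_eq ((pow_cont a).mul hf) ((pow_cont a).mul hg) h x hx
  have h0 : ((x ^ a : ℝ) : ℂ) ≠ 0 := by exact_mod_cast (Real.rpow_pos_of_pos hx a).ne'
  exact mul_left_cancel₀ h0 this

theorem even_ext {φ ψ : SchwartzMap ℝ ℂ} (hφ : IsEvenSchwartz φ) (hψ : IsEvenSchwartz ψ)
    (h : ∀ x : ℝ, 0 < x → φ x = ψ x) : φ = ψ := by
  have h1 : ∀ x : ℝ, 0 ≤ x → φ x = ψ x := by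
    intro x hx
    have hcl : IsClosed {x : ℝ | φ x = ψ x} := isClosed_eq φ.continuous ψ.continuous
    have : Ici (0 : ℝ) ⊆ {x : ℝ | φ x = ψ x} := by
      rw [← closure_Ioi]; exact closure_minimal h hcl
    exact this hx
  ext x
  rcases le_total 0 x with hx | hx
  · exact h1 x hx
  · rw [← hφ, ← hψ]; exact h1 _ (by linarith)

/-- Even Schwartz functions. -/
def evS : Submodule ℂ (SchwartzMap ℝ ℂ) where
  carrier := {φ | IsEvenSchwartz φ}
  zero_mem' := by intro x; simp
  add_mem' := by intro φ ψ h1 h2 x; simp [h1 x, h2 x]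
  smul_mem' := by intro c φ h x; simp [h x]

/-- The inclusion of the domain. -/
noncomputable def Jmap (a c₁ : ℝ) (hσ : -1 / 2 < a + c₁) : evS →ₗ[ℂ] Lp ℂ 2 (radMeasure c₁) where
  toFun φ := (goodFn_memLp (schwartz_good φ.1) hσ).toLp _
  map_add' φ ψ := by
    rw [← MemLp.toLp_add]
    congr 1; ext x; simp [mul_add]
  map_smul' c φ := by
    rw [← MemLp.toLp_const_smul]
    congr 1; ext x; simp; ring

/-- The operator on the domain. -/
noncomputable def Kmap (s a c₁ : ℝ) (hσ : -1 / 2 < a + c₁) : evS →ₗ[ℂ] Lp ℂ 2 (radMeasure c₁) where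
  toFun φ := (goodFn_memLp (Qop_good s (a + c₁) φ.1 φ.2) hσ).toLp _
  map_add' φ ψ := by
    rw [← MemLp.toLp_add]
    congr 1; ext x; simp [mul_add, Qop_add]
  map_smul' c φ := by
    rw [← MemLp.toLp_const_smul]
    congr 1; ext x; simp [Qop_smul]; ring

theorem Jmap_coe (a c₁ : ℝ) (hσ : -1 / 2 < a + c₁) (φ : evS) :
    Jmap a c₁ hσ φ =ᵐ[radMeasure c₁] fun ρ : ℝ => ((ρ ^ a : ℝ) : ℂ) * φ.1 ρ :=
  MemLp.coeFn_toLp (goodFn_memLp (schwartz_good φ.1) hσ)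

theorem Kmap_coe (s a c₁ : ℝ) (hσ : -1 / 2 < a + c₁) (φ : evS) :
    Kmap s a c₁ hσ φ =ᵐ[radMeasure c₁] fun ρ : ℝ => ((ρ ^ a : ℝ) : ℂ) * Qop s (a + c₁) φ.1 ρ :=
  MemLp.coeFn_toLp (goodFn_memLp (Qop_good s (a + c₁) φ.1 φ.2) hσ)

theorem Jmap_inj (a c₁ : ℝ) (hσ : -1 / 2 < a + c₁) : Function.Injective (Jmap a c₁ hσ) := by
  intro φ ψ h
  apply Subtype.ext
  apply even_ext φ.2 ψ.2
  have h1 := (Jmap_coe a c₁ hσ φ).symm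
  rw [h] at h1
  exact powSchwartz_inj φ.1.continuous.continuousOn ψ.1.continuous.continuousOn
    (h1.trans (Jmap_coe a c₁ hσ ψ))

/-- The operator `P` with domain `𝒟`. -/
noncomputable def Tmap (s a c₁ : ℝ) (hσ : -1 / 2 < a + c₁) :
    Lp ℂ 2 (radMeasure c₁) →ₗ.[ℂ] Lp ℂ 2 (radMeasure c₁) where
  domain := LinearMap.range (Jmap a c₁ hσ)
  toFun := (Kmap s a c₁ hσ).comp (LinearEquiv.ofInjective _ (Jmap_inj a c₁ hσ)).symm.toLinearMap

theorem Tmap_J (s a c₁ : ℝ) (hσ : -1 / 2 < a + c₁) (φ : evS) (u : Lp ℂ 2 (radMeasure c₁))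
    (h : u ∈ (Tmap s a c₁ hσ).domain) (e : u = Jmap a c₁ hσ φ) :
    Tmap s a c₁ hσ ⟨u, h⟩ = Kmap s a c₁ hσ φ := by
  subst e
  change Kmap s a c₁ hσ ((LinearEquiv.ofInjective _ (Jmap_inj a c₁ hσ)).symm _) = _
  congr 1
  exact (LinearEquiv.symm_apply_eq _).2 rfl

theorem Tmap_domain (s a c₁ : ℝ) (hσ : -1 / 2 < a + c₁) :
    ((Tmap s a c₁ hσ).domain : Set (Lp ℂ 2 (radMeasure c₁))) = Dset a c₁ := by
  ext u
  constructor
  · rintro ⟨φ, rfl⟩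
    exact ⟨φ.1, φ.2, Jmap_coe a c₁ hσ φ⟩
  · rintro ⟨φ, h1, h2⟩
    exact ⟨⟨φ, h1⟩, Lp.ext ((Jmap_coe a c₁ hσ ⟨φ, h1⟩).trans h2.symm)⟩

theorem Tmap_Pop (s c₁ c₂ a : ℝ) (ha : a ^ 2 + (2 * c₁ - 1) * a - c₂ = 0) (hσ : -1 / 2 < a + c₁)
    (u : Lp ℂ 2 (radMeasure c₁)) (hu : u ∈ (Tmap s a c₁ hσ).domain) (φ : SchwartzMap ℝ ℂ)
    (hφ : IsEvenSchwartz φ) (h : (u : ℝ → ℂ) =ᵐ[radMeasure c₁] powSchwartz a φ) :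
    (Tmap s a c₁ hσ ⟨u, hu⟩ : ℝ → ℂ) =ᵐ[radMeasure c₁] Pop s c₁ c₂ (powSchwartz a φ) := by
  rw [Tmap_J s a c₁ hσ ⟨φ, hφ⟩ u hu (Lp.ext (h.trans (Jmap_coe a c₁ hσ ⟨φ, hφ⟩).symm))]
  filter_upwards [Kmap_coe s a c₁ hσ ⟨φ, hφ⟩, rad_ae_pos c₁] with x h1 h2
  rw [h1, Pop_eq s c₁ c₂ a ha φ x h2]

end Meas


section Sym
open Filter Topology Asymptotics Set ComplexConjugate

/-- Wronskian. -/
noncomputable def Wr (σ : ℝ) (φ ψ : SchwartzMap ℝ ℂ) : ℝ → ℂ := fun x =>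
  ((x ^ (2 * σ) : ℝ) : ℂ) * (conj (φ x) * dS ψ x - conj (dS φ x) * ψ x)

theorem Wr_hasDerivAt (s σ : ℝ) (φ ψ : SchwartzMap ℝ ℂ) (x : ℝ) (hx : 0 < x) :
    HasDerivAt (Wr σ φ ψ) (((x ^ (2 * σ) : ℝ) : ℂ) *
      (conj (Qop s σ φ x) * ψ x - conj (φ x) * Qop s σ ψ x)) x := by
  have h0 := (Real.hasDerivAt_rpow_const (p := 2 * σ) (Or.inl hx.ne')).ofReal_comp
  have h1 := (dS_hasDerivAt φ x).star
  have h2 := (dS_hasDerivAt (dS φ) x).star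
  have h3 := h0.mul ((h1.mul (dS_hasDerivAt (dS ψ) x)).sub (h2.mul (dS_hasDerivAt ψ x)))
  convert! h3 using 1
  rw [Real.rpow_sub_one hx.ne']
  have hx' : (x : ℂ) ≠ 0 := by exact_mod_cast hx.ne'
  simp only [Qop, map_add, map_mul, map_neg, map_one, map_pow, map_ofNat, Complex.conj_ofReal, Complex.star_def]
  simp
  field_simp
  ring

theorem bigO_ofReal (f : ℝ → ℝ) (l : Filter ℝ) : (fun x => ((f x : ℝ) : ℂ)) =O[l] f :=
  IsBigO.of_bound 1 (Eventually.of_forall fun x => by simp)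

theorem bigO_conj {f : ℝ → ℂ} {g : ℝ → ℝ} {l : Filter ℝ} (h : f =O[l] g) :
    (fun x => conj (f x)) =O[l] g := by
  refine (IsBigO.of_bound 1 (Eventually.of_forall fun x => ?_)).trans h
  simp

theorem Wr_zero (σ : ℝ) (hσ : -1 / 2 < σ) (φ ψ : SchwartzMap ℝ ℂ) (hφ : IsEvenSchwartz φ)
    (hψ : IsEvenSchwartz ψ) : Wr σ φ ψ 0 = 0 ∧ ContinuousWithinAt (Wr σ φ ψ) (Ici 0) 0 := by
  have e1 : dS φ 0 = 0 := even_deriv_zero φ hφ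
  have e2 : dS ψ 0 = 0 := even_deriv_zero ψ hψ
  have h0 : Wr σ φ ψ 0 = 0 := by simp [Wr, e1, e2]
  refine ⟨h0, ?_⟩
  rw [← continuousWithinAt_Ioi_iff_Ici]
  unfold ContinuousWithinAt
  rw [h0]
  have h1 : Wr σ φ ψ =O[𝓝[>] 0] (fun x : ℝ => x ^ (2 * σ) * x) := by
    refine (bigO_ofReal _ _).mul (IsBigO.sub ?_ ?_)
    · simpa using (bigO_conj (schwartz_zero φ)).mul (even_dS_bigO ψ hψ)
    · simpa using (bigO_conj (even_dS_bigO φ hφ)).mul (schwartz_zero ψ)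
  refine h1.trans_tendsto ?_
  have h2 : Tendsto (fun x : ℝ => x ^ (2 * σ + 1)) (𝓝[>] 0) (𝓝 0) := by
    have := (Real.continuousAt_rpow_const 0 (2 * σ + 1) (Or.inr (by linarith))).tendsto
    rw [Real.zero_rpow (by linarith)] at this
    exact this.mono_left nhdsWithin_le_nhds
  refine h2.congr' ?_
  filter_upwards [self_mem_nhdsWithin] with x hx
  rw [Real.rpow_add_one (ne_of_gt hx)]

theorem Wr_top (σ : ℝ) (φ ψ : SchwartzMap ℝ ℂ) : Tendsto (Wr σ φ ψ) atTop (𝓝 0) := by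
  have h1 : Wr σ φ ψ =O[atTop] (fun x : ℝ => x ^ (2 * σ) * (x ^ (-(2 * σ) - 1) * x ^ (0 : ℝ))) := by
    refine (bigO_ofReal _ _).mul (IsBigO.sub ?_ ?_)
    · exact (bigO_conj (schwartz_top φ _)).mul (schwartz_top (dS ψ) _)
    · exact (bigO_conj (schwartz_top (dS φ) _)).mul (schwartz_top ψ _)
  refine h1.trans_tendsto ?_
  refine (tendsto_inv_atTop_zero (𝕜 := ℝ)).congr' ?_
  filter_upwards [eventually_gt_atTop 0] with x hx
  rw [← Real.rpow_add hx, ← Real.rpow_add hx, ← Real.rpow_neg_one]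
  congr 1; ring

theorem KJ_symm (s a c₁ : ℝ) (hσ : -1 / 2 < a + c₁) (φ ψ : evS) :
    ⟪Kmap s a c₁ hσ φ, Jmap a c₁ hσ ψ⟫_ℂ = ⟪Jmap a c₁ hσ φ, Kmap s a c₁ hσ ψ⟫_ℂ := by
  have i1 := L2.integrable_inner (𝕜 := ℂ) (Kmap s a c₁ hσ φ) (Jmap a c₁ hσ ψ)
  have i2 := L2.integrable_inner (𝕜 := ℂ) (Jmap a c₁ hσ φ) (Kmap s a c₁ hσ ψ)
  have i3 := i1.sub i2
  rw [← sub_eq_zero, L2.inner_def, L2.inner_def, ← integral_sub i1 i2]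
  have hae : ∀ᵐ x ∂(volume.restrict (Ioi (0 : ℝ))),
      (x ^ (2 * c₁)) • (⟪Kmap s a c₁ hσ φ x, Jmap a c₁ hσ ψ x⟫_ℂ
        - ⟪Jmap a c₁ hσ φ x, Kmap s a c₁ hσ ψ x⟫_ℂ) =
      ((x ^ (2 * (a + c₁)) : ℝ) : ℂ) *
      (conj (Qop s (a + c₁) φ.1 x) * ψ.1 x - conj (φ.1 x) * Qop s (a + c₁) ψ.1 x) := by
    filter_upwards [(rad_ae_iff c₁ _).1 (Jmap_coe a c₁ hσ φ), (rad_ae_iff c₁ _).1 (Jmap_coe a c₁ hσ ψ),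
      (rad_ae_iff c₁ _).1 (Kmap_coe s a c₁ hσ φ), (rad_ae_iff c₁ _).1 (Kmap_coe s a c₁ hσ ψ),
      ae_restrict_mem measurableSet_Ioi] with x h1 h2 h3 h4 hx
    have hx : 0 < x := hx
    rw [h1, h2, h3, h4]
    have : x ^ (2 * (a + c₁)) = x ^ (2 * c₁) * (x ^ a * x ^ a) := by
      rw [← Real.rpow_add hx, ← Real.rpow_add hx]; congr 1; ring
    rw [this]
    simp only [RCLike.inner_apply, map_mul, Complex.conj_ofReal, Complex.real_smul]
    push_cast
    ring
  rw [rad_integral, integral_congr_ae hae]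
  rw [rad_integrable_iff] at i3
  have i4 : IntegrableOn _ (Ioi (0 : ℝ)) := i3.congr hae
  obtain ⟨w0, w1⟩ := Wr_zero (a + c₁) hσ φ.1 ψ.1 φ.2 ψ.2
  have := integral_Ioi_of_hasDerivAt_of_tendsto w1
    (fun x hx => Wr_hasDerivAt s (a + c₁) φ.1 ψ.1 x hx) i4 (Wr_top (a + c₁) φ.1 ψ.1)
  rw [this, w0, sub_zero]

theorem Tmap_symm (s a c₁ : ℝ) (hσ : -1 / 2 < a + c₁) (x y : (Tmap s a c₁ hσ).domain) :
    ⟪Tmap s a c₁ hσ x, (y : Lp ℂ 2 (radMeasure c₁))⟫_ℂ =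
      ⟪(x : Lp ℂ 2 (radMeasure c₁)), Tmap s a c₁ hσ y⟫_ℂ := by
  obtain ⟨x, hx⟩ := x
  obtain ⟨y, hy⟩ := y
  obtain ⟨φ, rfl⟩ := id hx
  obtain ⟨ψ, rfl⟩ := id hy
  rw [Tmap_J s a c₁ hσ φ _ hx rfl, Tmap_J s a c₁ hσ ψ _ hy rfl]
  exact KJ_symm s a c₁ hσ φ ψ
end Sym



section Moment
open Filter Topology Set FourierTransform

theorem moment_exp (G : ℝ → ℂ) (hG : ∀ t : ℝ, Integrable (fun x => Real.exp (t * |x|) • G x))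
    (hm : ∀ n : ℕ, ∫ x : ℝ, (x : ℂ) ^ n * G x = 0) (c : ℂ) :
    ∫ x : ℝ, Complex.exp (c * x) * G x = 0 := by
  have hG0 : Integrable G := by simpa using hG 0
  have key := hasSum_integral_of_dominated_convergence (μ := volume)
    (F := fun (n : ℕ) (x : ℝ) => ((c * x) ^ n / n.factorial) * G x)
    (f := fun x : ℝ => Complex.exp (c * x) * G x)
    (fun n x => ((‖c‖ * |x|) ^ n / n.factorial) * ‖G x‖) ?_ ?_ ?_ ?_ ?_
  · have h0 : (fun n : ℕ => ∫ x : ℝ, ((c * x) ^ n / n.factorial) * G x) = fun _ => 0 := by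
      funext n
      have : ∀ x : ℝ, ((c * x) ^ n / n.factorial) * G x = (c ^ n / n.factorial) * ((x : ℂ) ^ n * G x) := by
        intro x; ring
      simp_rw [this]
      rw [integral_const_mul, hm, mul_zero]
    rw [h0] at key
    exact key.unique hasSum_zero
  · intro n
    refine AEStronglyMeasurable.mul (Continuous.aestronglyMeasurable (by fun_prop)) hG0.1
  · intro n
    refine Eventually.of_forall fun x => ?_
    simp [mul_pow]
  · refine Eventually.of_forall fun x => ?_
    exact (Real.summable_pow_div_factorial _).mul_right _
  · have := (hG ‖c‖).norm
    refine this.congr (Eventually.of_forall fun x => ?_)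
    simp only [norm_smul, Real.norm_eq_abs, Real.abs_exp]
    rw [tsum_mul_right, Real.exp_eq_exp_ℝ, NormedSpace.exp_eq_tsum_div]
  · refine Eventually.of_forall fun x => ?_
    apply HasSum.mul_right
    rw [Complex.exp_eq_exp_ℂ]
    exact NormedSpace.expSeries_div_hasSum_exp (c * x)

theorem moment_zero (G : ℝ → ℂ) (hG : ∀ t : ℝ, Integrable (fun x => Real.exp (t * |x|) • G x))
    (hm : ∀ n : ℕ, ∫ x : ℝ, (x : ℂ) ^ n * G x = 0) : ∀ᵐ x : ℝ, G x = 0 := by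
  have hG0 : Integrable G := by simpa using hG 0
  have hF : ∀ w : ℝ, 𝓕 G w = 0 := by
    intro w
    rw [Real.fourier_eq']
    rw [← moment_exp G hG hm (-(2 * Real.pi * w) * Complex.I)]
    congr 1; ext x
    simp only [smul_eq_mul]
    congr 2
    simp
    ring
  apply ae_eq_zero_of_integral_contDiff_smul_eq_zero hG0.locallyIntegrable
  intro g hg1 hg2
  have hg₁ : HasCompactSupport (Complex.ofRealCLM ∘ g) := hg2.comp_left rfl
  have hg₃ : ContDiff ℝ (↑(⊤ : ℕ∞)) (Complex.ofRealCLM ∘ g) := by fun_prop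
  let h : SchwartzMap ℝ ℂ := hg₁.toSchwartzMap hg₃
  let ψ : SchwartzMap ℝ ℂ := 𝓕⁻ h
  have e : 𝓕 ψ = h := FourierTransform.fourier_fourierInv_eq h
  have e2 : 𝓕 (ψ : ℝ → ℂ) = (h : ℝ → ℂ) := by
    rw [← SchwartzMap.fourier_coe, e]
  have key := VectorFourier.integral_fourierIntegral_smul_eq_flip (L := innerₗ ℝ) (μ := volume) (ν := volume)
      Real.continuous_fourierChar continuous_inner hG0 ψ.integrable
  have k1 : ∫ x, 𝓕 G x • ψ x = ∫ x, G x • 𝓕 (ψ : ℝ → ℂ) x := by simpa using! key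
  rw [e2] at k1
  simp only [hF, zero_smul, integral_zero] at k1
  rw [k1]
  congr 1; ext x
  have : h x = (g x : ℂ) := rfl
  rw [this]
  simp [mul_comm]
end Moment


section Complete
open Filter Topology Asymptotics Set Polynomial ComplexConjugate

theorem gauss_good (s : ℝ) (hs : 0 < s) (t : ℝ) :
    GoodFn (fun x : ℝ => ((Real.exp (-(s / 2) * x ^ 2 + t * x) : ℝ) : ℂ)) := by
  refine ⟨by fun_prop, ?_, fun r => ?_⟩
  · refine (ContinuousAt.tendsto (x := (0 : ℝ))
      (f := fun x : ℝ => ((Real.exp (-(s / 2) * x ^ 2 + t * x) : ℝ) : ℂ)) ?_).isBigO_one ℝ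
        |>.mono nhdsWithin_le_nhds
    fun_prop
  · exact (bigO_ofReal _ _).trans
      (rexp_neg_quadratic_isLittleO_rpow_atTop (by linarith : -(s / 2) < 0) t r).isBigO

/-- The function whose moments are computed. -/
noncomputable def G0 (s a c : ℝ) (f : ℝ → ℂ) : ℝ → ℂ :=
  indicator (Ioi 0) (fun x : ℝ => (x ^ (2 * c)) •
    (((x ^ a : ℝ) : ℂ) * ((Real.exp (-(s / 2) * x ^ 2) : ℝ) : ℂ) * f x))

theorem G0_exp (s a c : ℝ) (hs : 0 < s) (hσ : -1 / 2 < a + c) (f : Lp ℂ 2 (radMeasure c)) (t : ℝ) :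
    Integrable (fun x => Real.exp (t * |x|) • G0 s a c f x) := by
  have h1 := goodFn_memLp (gauss_good s hs t) hσ
  have h2 := h1.integrable_mul (Lp.memLp f)
  rw [rad_integrable_iff, ← integrable_indicator_iff measurableSet_Ioi] at h2
  refine h2.congr (Eventually.of_forall fun x => ?_)
  by_cases hx : 0 < x
  · simp only [G0, indicator_of_mem (show x ∈ Ioi (0 : ℝ) from hx), abs_of_pos hx, Real.exp_add,
      Pi.mul_apply, Complex.real_smul]
    push_cast
    ring
  · simp only [G0, indicator_of_notMem (show x ∉ Ioi (0 : ℝ) from hx), smul_zero]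

theorem G0_pow (s a c : ℝ) (hs : 0 < s) (hσ : -1 / 2 < a + c) (f : Lp ℂ 2 (radMeasure c)) (n : ℕ) :
    Integrable (fun x : ℝ => (x : ℂ) ^ n * G0 s a c f x) := by
  have h1 := (G0_exp s a c hs hσ f 1).norm.const_mul (n.factorial : ℝ)
  have h0 : Integrable (G0 s a c f) := by simpa using G0_exp s a c hs hσ f 0
  refine h1.mono' (AEStronglyMeasurable.mul (by fun_prop) h0.1) (Eventually.of_forall fun x => ?_)
  rw [norm_mul, norm_smul, norm_pow, Complex.norm_real, Real.norm_eq_abs, ← mul_assoc,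
    Real.norm_eq_abs, abs_of_pos (Real.exp_pos _), one_mul]
  gcongr
  have := Real.pow_div_factorial_le_exp |x| (abs_nonneg x) n
  rw [div_le_iff₀ (by positivity)] at this
  linarith

theorem gS_expand_even (s : ℝ) (hs : 0 < s) (q : ℂ[X]) : IsEvenSchwartz (gS s hs (expand ℂ 2 q)) := by
  intro x
  simp [gS_apply, expand_eval]

/-- Polynomials embedded in even Schwartz functions. -/
noncomputable def pE (s : ℝ) (hs : 0 < s) : ℂ[X] →ₗ[ℂ] evS where
  toFun q := ⟨gS s hs (expand ℂ 2 q), gS_expand_even s hs q⟩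
  map_add' p q := by
    apply Subtype.ext; ext x
    simp [gS_apply, add_mul]
  map_smul' c q := by
    apply Subtype.ext; ext x
    simp [gS_apply, expand_eval, mul_assoc]

theorem pE_apply (s : ℝ) (hs : 0 < s) (q : ℂ[X]) (x : ℝ) :
    (pE s hs q).1 x = q.eval ((x : ℂ) ^ 2) * ((Real.exp (-(s / 2) * x ^ 2) : ℝ) : ℂ) := by
  change gS s hs (expand ℂ 2 q) x = _
  rw [gS_apply, expand_eval]

theorem pE_inj (s : ℝ) (hs : 0 < s) (q : ℂ[X]) (h : pE s hs q = 0) : q = 0 := by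
  have h1 : ∀ x : ℝ, q.eval ((x : ℂ) ^ 2) = 0 := by
    intro x
    have h2 := pE_apply s hs q x
    rw [h] at h2
    have h3 : ((Real.exp (-(s / 2) * x ^ 2) : ℝ) : ℂ) ≠ 0 := by
      exact_mod_cast (Real.exp_pos _).ne'
    exact (mul_eq_zero.1 h2.symm).resolve_right h3
  apply Polynomial.eq_zero_of_infinite_isRoot
  refine Set.Infinite.mono ?_ (Set.infinite_range_of_injective (f := fun n : ℕ => ((n : ℂ)) ^ 2) ?_)
  · rintro _ ⟨n, rfl⟩
    simpa using h1 n
  · intro m n h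
    have h' : (m ^ 2 : ℕ) = n ^ 2 := by
      have : ((m : ℂ)) ^ 2 = (n : ℂ) ^ 2 := h
      exact_mod_cast this
    exact Nat.pow_left_injective (by norm_num) h'

theorem complete_zero (s a c : ℝ) (hs : 0 < s) (hσ : -1 / 2 < a + c) (f : Lp ℂ 2 (radMeasure c))
    (hf : ∀ q : ℂ[X], ⟪Jmap a c hσ (pE s hs q), f⟫_ℂ = 0) : f = 0 := by
  have hI : ∀ k : ℕ, ∫ x : ℝ, (x : ℂ) ^ (2 * k) * G0 s a c f x = 0 := by
    intro k
    have h := hf (X ^ k)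
    rw [L2.inner_def] at h
    have h2 : ∫ x, ⟪(Jmap a c hσ (pE s hs (X ^ k)) : ℝ → ℂ) x, f x⟫_ℂ ∂(radMeasure c) =
        ∫ x : ℝ, (((x ^ a : ℝ) : ℂ) * ((x : ℂ) ^ (2 * k) *
          ((Real.exp (-(s / 2) * x ^ 2) : ℝ) : ℂ))) * f x ∂(radMeasure c) := by
      apply integral_congr_ae
      filter_upwards [Jmap_coe a c hσ (pE s hs (X ^ k))] with x hx
      rw [hx, pE_apply, RCLike.inner_apply]
      simp only [map_mul, Complex.conj_ofReal, eval_pow, eval_X, map_pow, pow_mul]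
      ring
    rw [h2, rad_integral, ← integral_indicator measurableSet_Ioi] at h
    rw [← h]
    congr 1
    ext x
    by_cases hx : 0 < x
    · simp only [G0, indicator_of_mem (show x ∈ Ioi (0 : ℝ) from hx), Complex.real_smul]
      ring
    · simp only [G0, indicator_of_notMem (show x ∉ Ioi (0 : ℝ) from hx), mul_zero]
  have hz := moment_zero (fun x => G0 s a c f x + G0 s a c f (-x)) ?_ ?_
  · have : ∀ᵐ x ∂(volume.restrict (Ioi (0 : ℝ))), f x = 0 := by
      filter_upwards [ae_restrict_of_ae hz, ae_restrict_mem measurableSet_Ioi] with x h1 hx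
      have hx : 0 < x := hx
      have hn : -x ∉ Ioi (0 : ℝ) := by simp [hx.le]
      simp only [G0, indicator_of_mem (show x ∈ Ioi (0 : ℝ) from hx), indicator_of_notMem hn,
        add_zero, Complex.real_smul] at h1
      have e1 : ((x ^ (2 * c) : ℝ) : ℂ) ≠ 0 := by exact_mod_cast (Real.rpow_pos_of_pos hx _).ne'
      have e2 : ((x ^ a : ℝ) : ℂ) ≠ 0 := by exact_mod_cast (Real.rpow_pos_of_pos hx _).ne'
      have e3 : ((Real.exp (-(s / 2) * x ^ 2) : ℝ) : ℂ) ≠ 0 := by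
        exact_mod_cast (Real.exp_pos _).ne'
      exact (mul_eq_zero.1 ((mul_eq_zero.1 h1).resolve_left e1)).resolve_left (mul_ne_zero e2 e3)
    rw [Lp.eq_zero_iff_ae_eq_zero]
    exact (rad_ae_iff c _).2 this
  · intro t
    have h1 := G0_exp s a c hs hσ f t
    refine (h1.add h1.comp_neg).congr (Eventually.of_forall fun x => ?_)
    simp
  · intro n
    have h1 := G0_pow s a c hs hσ f n
    have h3 : ∫ x : ℝ, (x : ℂ) ^ n * G0 s a c f (-x) =
        (-1) ^ n * ∫ x : ℝ, (x : ℂ) ^ n * G0 s a c f x := by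
      rw [← integral_neg_eq_self (fun x : ℝ => (x : ℂ) ^ n * G0 s a c f x), ← integral_const_mul]
      congr 1; ext x
      push_cast
      rw [← mul_assoc, ← mul_pow]
      ring
    have h2 : Integrable (fun x : ℝ => (x : ℂ) ^ n * G0 s a c f (-x)) := by
      refine (h1.comp_neg.const_mul ((-1) ^ n)).congr (Eventually.of_forall fun x => ?_)
      simp only [Complex.ofReal_neg]
      rw [← mul_assoc, ← mul_pow]
      ring
    simp only [mul_add]
    rw [integral_add h1 h2, h3]
    rcases Nat.even_or_odd' n with ⟨k, rfl | rfl⟩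
    · rw [hI k]; simp
    · rw [Odd.neg_one_pow ⟨k, rfl⟩]; ring

theorem K_pE (s a c : ℝ) (hs : 0 < s) (hσ : -1 / 2 < a + c) (q : ℂ[X]) :
    Kmap s a c hσ (pE s hs q) = Jmap a c hσ (pE s hs (lagOp s (a + c) q)) := by
  apply Lp.ext
  filter_upwards [Kmap_coe s a c hσ (pE s hs q), Jmap_coe a c hσ (pE s hs (lagOp s (a + c) q)),
    rad_ae_pos c] with x h1 h2 hx
  rw [h1, h2]
  congr 1
  have e1 : dS (gS s hs (expand ℂ 2 q)) = gS s hs (gD s (expand ℂ 2 q)) := by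
    ext y; exact congrFun (gS_deriv s hs (expand ℂ 2 q)) y
  have e2 : dS (gS s hs (gD s (expand ℂ 2 q))) = gS s hs (gD s (gD s (expand ℂ 2 q))) := by
    ext y; exact congrFun (gS_deriv s hs (gD s (expand ℂ 2 q))) y
  change Qop s (a + c) (gS s hs (expand ℂ 2 q)) x = gS s hs (expand ℂ 2 (lagOp s (a + c) q)) x
  have h := congrArg (fun p : ℂ[X] => p.eval (x : ℂ)) (gD_lag s (a + c) q)
  simp only [eval_add, eval_sub, eval_mul, eval_neg, eval_X, eval_C, eval_pow] at h
  simp only [Qop, e1, e2, gS_apply]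
  have hx' : (x : ℂ) ≠ 0 := by exact_mod_cast hx.ne'
  apply mul_left_cancel₀ hx'
  push_cast at h ⊢
  rw [← mul_assoc (x : ℂ) (eval _ _), ← h]
  field_simp
  ring

theorem exists_basis (s a c : ℝ) (hs : 0 < s) (hσ : -1 / 2 < a + c) :
    ∃ (χ : HilbertBasis ℕ ℂ (Lp ℂ 2 (radMeasure c)))
      (hχ : ∀ k : ℕ, χ k ∈ (Tmap s a c hσ).domain),
      ∀ k : ℕ, Tmap s a c hσ ⟨χ k, hχ k⟩ = ((((4 * k + 1 + 2 * (a + c)) * s : ℝ)) : ℂ) • χ k := by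
  choose q hq1 hq2 using lag_eigen s (a + c) hs
  have hq0 : ∀ k, q k ≠ 0 := fun k h => by simpa [h] using hq1 k
  let l : ℕ → ℝ := fun k => (4 * k + 1 + 2 * (a + c)) * s
  have hJ : ∀ k, Jmap a c hσ (pE s hs (q k)) ≠ 0 := fun k h =>
    hq0 k (pE_inj s hs _ (Jmap_inj a c hσ (by rw [h, map_zero])))
  let n : ℕ → ℂ := fun k => ((‖Jmap a c hσ (pE s hs (q k))‖⁻¹ : ℝ) : ℂ)
  have hn : ∀ k, n k ≠ 0 := fun k => by
    have := norm_ne_zero_iff.2 (hJ k)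
    simp only [n]
    exact_mod_cast inv_ne_zero this
  let v : ℕ → Lp ℂ 2 (radMeasure c) := fun k => Jmap a c hσ (n k • pE s hs (q k))
  have hv : ∀ k, v k = n k • Jmap a c hσ (pE s hs (q k)) := fun k => map_smul _ _ _
  have hK : ∀ k, Kmap s a c hσ (n k • pE s hs (q k)) = (l k : ℂ) • v k := by
    intro k
    rw [map_smul, K_pE, hq2, hv, smul_comm, ← smul_eq_C_mul, map_smul, map_smul]
    congr 2
    simp only [l]; push_cast; ring
  have hon : Orthonormal ℂ v := by
    constructor
    · intro k
      rw [hv, norm_smul]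
      simp only [n, Complex.norm_real, norm_inv, norm_norm]
      exact inv_mul_cancel₀ (norm_ne_zero_iff.2 (hJ k))
    · intro i j hij
      have h := KJ_symm s a c hσ (n i • pE s hs (q i)) (n j • pE s hs (q j))
      rw [hK, hK] at h
      change ⟪(l i : ℂ) • v i, v j⟫_ℂ = ⟪v i, (l j : ℂ) • v j⟫_ℂ at h
      rw [inner_smul_left, inner_smul_right, Complex.conj_ofReal] at h
      have h2 : ((l i : ℂ) - l j) * ⟪v i, v j⟫_ℂ = 0 := by linear_combination h
      refine (mul_eq_zero.1 h2).resolve_left (fun h3 => hij ?_)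
      have h4 : l i = l j := by exact_mod_cast sub_eq_zero.1 h3
      have h5 := mul_right_cancel₀ hs.ne' h4
      have h6 : (i : ℝ) = j := by linarith
      exact_mod_cast h6
  let S : Polynomial.Sequence ℂ := ⟨q, hq1⟩
  have hS : Submodule.span ℂ (Set.range q) = ⊤ :=
    S.span (fun i => (leadingCoeff_ne_zero.2 (hq0 i)).isUnit)
  have hsp : (Submodule.span ℂ (Set.range v))ᗮ = ⊥ := by
    rw [Submodule.eq_bot_iff]
    intro f hf
    rw [Submodule.mem_orthogonal] at hf
    apply complete_zero s a c hs hσ f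
    intro p
    have hp : p ∈ Submodule.span ℂ (Set.range q) := hS ▸ Submodule.mem_top
    induction hp using Submodule.span_induction with
    | mem x hx =>
      obtain ⟨k, rfl⟩ := hx
      have h := hf (v k) (Submodule.subset_span ⟨k, rfl⟩)
      rw [hv, inner_smul_left] at h
      exact (mul_eq_zero.1 h).resolve_left (by simpa using hn k)
    | zero => simp
    | add x y _ _ hx hy => rw [map_add, map_add, inner_add_left, hx, hy, add_zero]
    | smul z x _ hx => rw [map_smul, map_smul, inner_smul_left, hx, mul_zero]
  have hc : ∀ k, HilbertBasis.mkOfOrthogonalEqBot hon hsp k = v k := fun k => by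
    rw [HilbertBasis.coe_mkOfOrthogonalEqBot]
  refine ⟨HilbertBasis.mkOfOrthogonalEqBot hon hsp, fun k => ?_, fun k => ?_⟩
  · rw [hc]; exact ⟨_, rfl⟩
  · rw [Tmap_J s a c hσ (n k • pE s hs (q k)) _ _ (hc k), hK, hc]

end Complete


/-- Let `s > 0`, and let `a` satisfy `a² + (2c₁-1)a - c₂ = 0` with
`σ := a + c₁ > -1/2`. Then the operator `P = -d²/dρ² + s²ρ² - 2c₁ρ⁻¹ d/dρ + c₂ρ⁻²` with
domain `𝒟 = ρ^a 𝒮_{ev,+}` is densely defined and symmetric in `L²((0,∞), ρ^{2c₁}dρ)`, is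
essentially self-adjoint, and has a Hilbert basis of eigenfunctions with (simple)
eigenvalues `(4k + 1 + 2σ)s`, `k ∈ ℕ`, which exhaust the eigenvalues of its closure. -/
theorem statement0 (s c₁ c₂ a : ℝ) (hs : 0 < s)
    (ha : a ^ 2 + (2 * c₁ - 1) * a - c₂ = 0) (hσ : -1/2 < a + c₁) :
    ∃ T : Lp ℂ 2 (radMeasure c₁) →ₗ.[ℂ] Lp ℂ 2 (radMeasure c₁),
      -- `T` is the operator `P` with domain `𝒟`:
      (T.domain : Set (Lp ℂ 2 (radMeasure c₁))) = Dset a c₁ ∧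
      (∀ (u : Lp ℂ 2 (radMeasure c₁)) (hu : u ∈ T.domain) (φ : SchwartzMap ℝ ℂ),
        IsEvenSchwartz φ → (u : ℝ → ℂ) =ᵐ[radMeasure c₁] powSchwartz a φ →
        (T ⟨u, hu⟩ : ℝ → ℂ) =ᵐ[radMeasure c₁] Pop s c₁ c₂ (powSchwartz a φ)) ∧
      -- (i) `𝒟` is dense, `P` is symmetric (it maps `𝒟` into `H` since `T` does), and
      -- `P` is essentially self-adjoint: its closure is self-adjoint
      Dense (T.domain : Set (Lp ℂ 2 (radMeasure c₁))) ∧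
      (∀ x y : T.domain,
        ⟪T x, (y : Lp ℂ 2 (radMeasure c₁))⟫_ℂ = ⟪(x : Lp ℂ 2 (radMeasure c₁)), T y⟫_ℂ) ∧
      T.closure.adjoint = T.closure ∧
      -- (ii) Hilbert basis of eigenvectors in `𝒟` with eigenvalues `(4k+1+2σ)s`
      (∃ (χ : HilbertBasis ℕ ℂ (Lp ℂ 2 (radMeasure c₁)))
          (hχ : ∀ k : ℕ, χ k ∈ T.domain),
          ∀ k : ℕ, T ⟨χ k, hχ k⟩ =
            ((((4 * k + 1 + 2 * (a + c₁)) * s : ℝ)) : ℂ) • χ k) ∧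
      -- every eigenvalue of the closure is of this form, with multiplicity one
      (∀ μeig : ℂ,
        (∃ (u : Lp ℂ 2 (radMeasure c₁)) (hu : u ∈ T.closure.domain),
            u ≠ 0 ∧ T.closure ⟨u, hu⟩ = μeig • u) →
        (∃ k : ℕ, μeig = ((((4 * k + 1 + 2 * (a + c₁)) * s : ℝ)) : ℂ)) ∧
        (∀ (u v : Lp ℂ 2 (radMeasure c₁)) (hu : u ∈ T.closure.domain)
            (hv : v ∈ T.closure.domain), u ≠ 0 →
            T.closure ⟨u, hu⟩ = μeig • u → T.closure ⟨v, hv⟩ = μeig • v →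
            ∃ z : ℂ, v = z • u)) := by
  obtain ⟨χ, hχ, hl⟩ := exists_basis s a c₁ hs hσ
  have hinj : Function.Injective (fun k : ℕ => (4 * k + 1 + 2 * (a + c₁)) * s) := by
    intro i j hij
    have h5 := mul_right_cancel₀ hs.ne' hij
    have h6 : (i : ℝ) = j := by linarith
    exact_mod_cast h6
  have hd : Dense ((Tmap s a c₁ hσ).domain : Set (Lp ℂ 2 (radMeasure c₁))) := by
    have h1 := χ.dense_span
    have h2 : Submodule.span ℂ (Set.range χ) ≤ (Tmap s a c₁ hσ).domain := by
      rw [Submodule.span_le]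
      rintro _ ⟨k, rfl⟩
      exact hχ k
    exact (Submodule.dense_iff_topologicalClosure_eq_top.2 h1).mono h2
  have hm := abs_main (Tmap s a c₁ hσ) hd (Tmap_symm s a c₁ hσ) χ hχ _ hl hinj
  exact ⟨Tmap s a c₁ hσ, Tmap_domain s a c₁ hσ, Tmap_Pop s c₁ c₂ a ha hσ, hd,
    Tmap_symm s a c₁ hσ, hm.1, ⟨χ, hχ, hl⟩, hm.2⟩
end

section
/- Let H be an infinite-dimensional separable complex Hilbert space and let D be a self-adjoint densely defined operator on H. Then the following are equivalent: (i) there exist a Hilbert basis (e_n)_{n∈ℕ} of H and real numbers (μ_n)_{n∈ℕ} with e_n ∈ dom D and D e_n = μ_n e_n for all n, and |μ_n| → ∞ as n → ∞; (ii) the set { u ∈ dom D : ‖u‖² + ‖Du‖² ≤ 1 } is relatively compact in H. -/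
open scoped InnerProductSpace
open Filter Topology

/-- A subspace of `H × H` that equals its own adjoint relation. -/
def SelfAdjRel {H : Type*} [NormedAddCommGroup H] [InnerProductSpace ℂ H]
    (G : Submodule ℂ (H × H)) : Prop :=
  ∀ u w, (u, w) ∈ G ↔ ∀ v z, (v, z) ∈ G → ⟪w, v⟫_ℂ = ⟪u, z⟫_ℂ

theorem SelfAdjRel.isClosed {H : Type*} [NormedAddCommGroup H] [InnerProductSpace ℂ H]
    {G : Submodule ℂ (H × H)} (hG : SelfAdjRel G) : IsClosed (G : Set (H × H)) := by
  have : (G : Set (H × H)) = ⋂ p ∈ G, {x : H × H | ⟪x.2, p.1⟫_ℂ = ⟪x.1, p.2⟫_ℂ} := by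
    ext ⟨u, w⟩
    simp only [SetLike.mem_coe, Set.mem_iInter, Set.mem_ofPred_eq]
    rw [hG u w]
    exact ⟨fun h p hp => h p.1 p.2 hp, fun h v z hv => h (v, z) hv⟩
  rw [this]
  refine isClosed_biInter fun p _ => isClosed_eq ?_ ?_ <;> fun_prop

theorem SelfAdjRel.resolvent {H : Type*} [NormedAddCommGroup H] [InnerProductSpace ℂ H]
    [CompleteSpace H] {G : Submodule ℂ (H × H)} (hG : SelfAdjRel G) :
    ∃ T : H →L[ℂ] H, ∀ h, ∃ w, (T h, w) ∈ G ∧ (w, h - T h) ∈ G := by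
  let L := WithLp.prodContinuousLinearEquiv 2 ℂ H H
  let G' : Submodule ℂ (WithLp 2 (H × H)) := G.comap L.toLinearMap
  have hcl : IsClosed (G' : Set (WithLp 2 (H × H))) := hG.isClosed.preimage L.continuous
  have : CompleteSpace G' := hcl.completeSpace_coe
  let A : H →L[ℂ] WithLp 2 (H × H) := (L.symm : H × H →L[ℂ] _) ∘L ContinuousLinearMap.inl ℂ H H
  let B : WithLp 2 (H × H) →L[ℂ] H := ContinuousLinearMap.fst ℂ H H ∘L (L : _ →L[ℂ] H × H)
  refine ⟨B ∘L G'.starProjection ∘L A, fun h => ?_⟩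
  have h1 : G'.starProjection (A h) ∈ G' := Submodule.starProjection_apply_mem _ _
  have h2 := fun w hw => Submodule.starProjection_inner_eq_zero (K := G') (A h) w hw
  generalize hp : G'.starProjection (A h) = p at h1 h2
  have hB : (B ∘L G'.starProjection ∘L A) h = (L p).1 := by
    simp [B, hp]
  rw [hB]
  refine ⟨(L p).2, h1, ?_⟩
  rw [hG]
  intro v z hv
  have h3 := h2 (L.symm (v, z)) (by simpa [G'] using hv)
  simp [A, L] at h3 ⊢
  rw [inner_sub_left] at h3
  linear_combination h3

theorem SelfAdjRel.sym {H : Type*} [NormedAddCommGroup H] [InnerProductSpace ℂ H]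
    {G : Submodule ℂ (H × H)} (hG : SelfAdjRel G) {u w v z : H} (h : (u, w) ∈ G)
    (h' : (v, z) ∈ G) : ⟪w, v⟫_ℂ = ⟪u, z⟫_ℂ := (hG u w).1 h v z h'

/-- Existence of an eigenvector in the orthogonal complement of a set of eigenvectors. -/
theorem SelfAdjRel.exists_eigen {H : Type*} [NormedAddCommGroup H] [InnerProductSpace ℂ H]
    [CompleteSpace H] {G : Submodule ℂ (H × H)} (hG : SelfAdjRel G)
    (hc : IsCompact (closure {u : H | ∃ w, (u, w) ∈ G ∧ ‖u‖ ^ 2 + ‖w‖ ^ 2 ≤ 1}))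
    (hfun : ∀ x, ((0 : H), x) ∈ G → x = 0)
    (S : Set H) (hS : ∀ e ∈ S, ∃ μ : ℝ, (e, (μ : ℂ) • e) ∈ G)
    (hne : (Submodule.span ℂ S)ᗮ ≠ ⊥) :
    ∃ v ∈ (Submodule.span ℂ S)ᗮ, ‖v‖ = 1 ∧ ∃ μ : ℝ, (v, (μ : ℂ) • v) ∈ G := by
  obtain ⟨T, hT⟩ := hG.resolvent
  have hTsym : (T : H →ₗ[ℂ] H).IsSymmetric := by
    intro x y
    obtain ⟨w, hw1, hw2⟩ := hT x
    obtain ⟨z, hz1, hz2⟩ := hT y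
    have a := hG.sym hw2 hz1
    have b := hG.sym hw1 hz2
    rw [inner_sub_left] at a
    rw [inner_sub_right] at b
    simp only [ContinuousLinearMap.coe_coe]
    linear_combination - b - a
  have hTnorm : ∀ h, ∃ w, (T h, w) ∈ G ∧ ‖T h‖ ^ 2 + ‖w‖ ^ 2 ≤ ‖h‖ ^ 2 := by
    intro h
    obtain ⟨w, hw1, hw2⟩ := hT h
    refine ⟨w, hw1, ?_⟩
    have a := hG.sym hw2 hw1
    rw [inner_sub_left, inner_self_eq_norm_sq_to_K, inner_self_eq_norm_sq_to_K] at a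
    have b : ⟪h, T h⟫_ℂ = ((‖T h‖ ^ 2 + ‖w‖ ^ 2 : ℝ) : ℂ) := by
      push_cast; linear_combination a
    have c := norm_inner_le_norm (𝕜 := ℂ) h (T h)
    rw [b, Complex.norm_real, Real.norm_of_nonneg (by positivity)] at c
    nlinarith [sq_nonneg (‖h‖ - ‖T h‖), sq_nonneg ‖w‖]
  have hTc : IsCompactOperator T := by
    refine (isCompactOperator_iff_exists_mem_nhds_image_subset_compact _).2
      ⟨Metric.closedBall 0 1, Metric.closedBall_mem_nhds _ one_pos, _, hc, ?_⟩
    rintro _ ⟨h, hh, rfl⟩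
    apply subset_closure
    obtain ⟨w, hw, hn⟩ := hTnorm h
    refine ⟨w, hw, hn.trans ?_⟩
    have : ‖h‖ ≤ 1 := by simpa using hh
    nlinarith [norm_nonneg h]
  have memV : ∀ x, x ∈ (Submodule.span ℂ S)ᗮ ↔ ∀ e ∈ S, ⟪e, x⟫_ℂ = 0 := by
    intro x
    constructor
    · intro hx e he
      exact hx e (Submodule.subset_span he)
    · intro hx u hu
      induction hu using Submodule.span_induction with
      | mem y hy => exact hx y hy
      | zero => simp
      | add y z _ _ hy hz => simp [inner_add_left, hy, hz]
      | smul a y _ hy => simp [inner_smul_left, hy]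
  have hGV : ∀ x w, (x, w) ∈ G → x ∈ (Submodule.span ℂ S)ᗮ → w ∈ (Submodule.span ℂ S)ᗮ := by
    intro x w hxw hx
    rw [memV] at hx ⊢
    intro e he
    obtain ⟨μ, hμ⟩ := hS e he
    have := hG.sym hμ hxw
    rw [← this, inner_smul_left, hx e he, mul_zero]
  have hinv : ∀ x ∈ (Submodule.span ℂ S)ᗮ, (T : H →ₗ[ℂ] H) x ∈ (Submodule.span ℂ S)ᗮ := by
    intro x hx
    rw [memV] at hx ⊢
    intro e he
    obtain ⟨μ, hμ⟩ := hS e he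
    obtain ⟨w, hw1, hw2⟩ := hT x
    have a := hG.sym hμ hw1
    have b := hG.sym hμ hw2
    rw [inner_smul_left, Complex.conj_ofReal] at a b
    rw [inner_sub_right, hx e he, ← a] at b
    have c : (1 + (μ : ℂ) ^ 2) * ⟪e, T x⟫_ℂ = 0 := by linear_combination b
    have d : (1 + (μ : ℂ) ^ 2) ≠ 0 := by
      have : (1 + μ ^ 2 : ℝ) ≠ 0 := by positivity
      exact_mod_cast this
    simpa [d] using c
  let R : (Submodule.span ℂ S)ᗮ →L[ℂ] (Submodule.span ℂ S)ᗮ := T.restrict hinv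
  have hRc : IsCompactOperator R := IsCompactOperator.restrict' (f := (T : H →ₗ[ℂ] H)) hTc hinv
  have hRs : R.IsSymmetric := hTsym.restrict_invariant hinv
  have hR0 : R ≠ 0 := by
    intro h0
    apply hne
    rw [Submodule.eq_bot_iff]
    intro x hx
    have h1 : T x = 0 := by
      have := congrArg Subtype.val (DFunLike.congr_fun h0 (⟨x, hx⟩ : (Submodule.span ℂ S)ᗮ))
      exact this
    obtain ⟨w, hw1, hw2⟩ := hT x
    rw [h1] at hw1 hw2
    rw [hfun w hw1, sub_zero] at hw2
    exact hfun x hw2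
  obtain ⟨l, hl, hl0⟩ : ∃ l, Module.End.HasEigenvalue
      (R : Module.End ℂ (Submodule.span ℂ S)ᗮ) l ∧ l ≠ 0 := by
    by_contra! hcon
    exact hR0 ((ContinuousLinearMap.eq_zero_of_forall_hasEigenvalue_eq_zero hRc hRs).1 hcon)
  obtain ⟨⟨h, hV⟩, hh⟩ := hl.exists_hasEigenvector
  have hh0 : h ≠ 0 := fun h0 => hh.2 (Subtype.ext h0)
  have hTh : T h = l • h := congrArg Subtype.val hh.apply_eq_smul
  obtain ⟨w, hw1, hw2⟩ := hT h
  -- `D h = k`, `D k = c h`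
  obtain ⟨k, hk1, c, hk2⟩ : ∃ k, (h, k) ∈ G ∧ ∃ c : ℂ, (k, c • h) ∈ G := by
    refine ⟨l⁻¹ • w, ?_, l⁻¹ * (1 - l), ?_⟩
    · have := G.smul_mem l⁻¹ hw1
      simpa [hTh, hl0] using this
    · have := G.smul_mem l⁻¹ hw2
      rw [hTh] at this
      convert this using 1
      simp only [Prod.smul_mk, Prod.mk.injEq, true_and]
      module
  have hcv : c = (((‖k‖ / ‖h‖ : ℝ)) : ℂ) ^ 2 := by
    have a := hG.sym hk1 hk2
    rw [inner_smul_right, inner_self_eq_norm_sq_to_K, inner_self_eq_norm_sq_to_K] at a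
    have hn : (‖h‖ : ℂ) ≠ 0 := by simpa using hh0
    push_cast
    rw [div_pow, eq_div_iff (pow_ne_zero 2 hn)]
    exact a.symm
  -- an unnormalised eigenvector
  obtain ⟨v, hvV, hv0, μ, hvμ⟩ : ∃ v ∈ (Submodule.span ℂ S)ᗮ, v ≠ 0 ∧
      ∃ μ : ℝ, (v, (μ : ℂ) • v) ∈ G := by
    have hkV := hGV h k hk1 hV
    set ν : ℝ := ‖k‖ / ‖h‖ with hν
    by_cases hv : k + (ν : ℂ) • h = 0
    · refine ⟨h, hV, hh0, -ν, ?_⟩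
      have : ((-ν : ℝ) : ℂ) • h = k := by
        push_cast
        rw [neg_smul]
        exact (eq_neg_of_add_eq_zero_left hv).symm
      rw [this]
      exact hk1
    · refine ⟨_, Submodule.add_mem _ hkV (Submodule.smul_mem _ (ν : ℂ) hV), hv, ν, ?_⟩
      have := G.add_mem hk2 (G.smul_mem (ν : ℂ) hk1)
      convert this using 1
      simp only [Prod.smul_mk, Prod.mk_add_mk, Prod.mk.injEq, true_and, hcv]
      module
  refine ⟨((‖v‖⁻¹ : ℝ) : ℂ) • v, Submodule.smul_mem _ _ hvV, ?_, μ, ?_⟩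
  · rw [norm_smul, Complex.norm_real]
    simp [hv0]
  · have := G.smul_mem ((‖v‖⁻¹ : ℝ) : ℂ) hvμ
    rw [smul_comm]
    exact this

theorem orthonormal_dist_sq {H ι : Type*} [NormedAddCommGroup H] [InnerProductSpace ℂ H]
    {e : ι → H} (he : Orthonormal ℂ e) {i j : ι} (hij : i ≠ j) : ‖e i - e j‖ ^ 2 = 2 := by
  rw [@norm_sub_sq ℂ, he.1 i, he.1 j, he.2 hij]
  norm_num

theorem orthonormal_countable {H ι : Type*} [NormedAddCommGroup H] [InnerProductSpace ℂ H]
    [TopologicalSpace.SeparableSpace H]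
    {e : ι → H} (he : Orthonormal ℂ e) : Countable ι := by
  rw [← Set.countable_univ_iff]
  refine Set.PairwiseDisjoint.countable_of_isOpen (s := fun i => Metric.ball (e i) (1 / 2)) ?_
    (fun i _ => Metric.isOpen_ball) (fun i _ => Metric.nonempty_ball.2 (by norm_num))
  intro i _ j _ hij
  apply Metric.ball_disjoint_ball
  rw [dist_eq_norm]
  nlinarith [orthonormal_dist_sq he hij, norm_nonneg (e i - e j)]

theorem SelfAdjRel.exists_basis {H : Type*} [NormedAddCommGroup H] [InnerProductSpace ℂ H]
    [CompleteSpace H] [TopologicalSpace.SeparableSpace H]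
    (hinf : ¬ FiniteDimensional ℂ H) {G : Submodule ℂ (H × H)} (hG : SelfAdjRel G)
    (hc : IsCompact (closure {u : H | ∃ w, (u, w) ∈ G ∧ ‖u‖ ^ 2 + ‖w‖ ^ 2 ≤ 1}))
    (hfun : ∀ x, ((0 : H), x) ∈ G → x = 0) :
    ∃ (e : HilbertBasis ℕ ℂ H) (μ : ℕ → ℝ), ∀ n, (e n, (μ n : ℂ) • e n) ∈ G := by
  obtain ⟨S, hSmax⟩ := zorn_subset
    {S : Set H | Orthonormal ℂ (Subtype.val : S → H) ∧ ∀ e ∈ S, ∃ μ : ℝ, (e, (μ : ℂ) • e) ∈ G} (by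
      intro c hcS hchain
      refine ⟨⋃₀ c, ⟨?_, ?_⟩, fun s hs => Set.subset_sUnion_of_mem hs⟩
      · exact orthonormal_sUnion_of_directed hchain.directedOn fun s hs => (hcS hs).1
      · rintro e ⟨s, hs, he⟩
        exact (hcS hs).2 e he)
  obtain ⟨hSo, hSe⟩ := hSmax.prop
  have hbot : (Submodule.span ℂ S)ᗮ = ⊥ := by
    by_contra hne
    obtain ⟨v, hvV, hv1, hvμ⟩ := hG.exists_eigen hc hfun S hSe hne
    have hort : ∀ e ∈ S, ⟪e, v⟫_ℂ = 0 := fun e he => hvV e (Submodule.subset_span he)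
    have hvS : v ∉ S := by
      intro hv
      have := hort v hv
      rw [inner_self_eq_zero] at this
      simp [this] at hv1
    have hins : insert v S ∈ {S : Set H | Orthonormal ℂ (Subtype.val : S → H) ∧
        ∀ e ∈ S, ∃ μ : ℝ, (e, (μ : ℂ) • e) ∈ G} := by
      refine ⟨⟨?_, ?_⟩, ?_⟩
      · rintro ⟨x, rfl | hx⟩
        · exact hv1
        · exact hSo.1 ⟨x, hx⟩
      · rintro ⟨x, hx⟩ ⟨y, hy⟩ hxy
        have hxy' : x ≠ y := fun h => hxy (Subtype.ext h)
        change ⟪x, y⟫_ℂ = 0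
        rcases hx with rfl | hx <;> rcases hy with rfl | hy
        · exact absurd rfl hxy'
        · exact inner_eq_zero_symm.1 (hort y hy)
        · exact hort x hx
        · exact hSo.2 (i := ⟨x, hx⟩) (j := ⟨y, hy⟩) (fun h => hxy' (congrArg Subtype.val h))
      · rintro e (rfl | he)
        · exact hvμ
        · exact hSe e he
    exact hvS (hSmax.2 hins (Set.subset_insert v S) (Set.mem_insert v S))
  let b : HilbertBasis S ℂ H := HilbertBasis.mkOfOrthogonalEqBot hSo (by simpa using hbot)
  have hb : ∀ i, b i = i.1 := fun i => by simp [b]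
  have hcount : Countable S := orthonormal_countable hSo
  have hSinf : Infinite S := by
    by_contra hfin
    rw [not_infinite_iff_finite] at hfin
    have := Fintype.ofFinite S
    exact hinf (Module.Basis.finiteDimensional_of_finite b.toOrthonormalBasis.toBasis)
  obtain ⟨f⟩ : Nonempty (ℕ ≃ S) := by
    obtain ⟨d⟩ := nonempty_denumerable S
    exact ⟨(Denumerable.eqv S).symm⟩
  have hof : Orthonormal ℂ (fun n => (f n : H)) := hSo.comp f f.injective
  have hrange : Set.range (fun n => (f n : H)) = S := by
    rw [show (fun n => (f n : H)) = Subtype.val ∘ f from rfl, f.surjective.range_comp]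
    simp
  choose μ hμ using fun n => hSe (f n) (f n).2
  refine ⟨HilbertBasis.mkOfOrthogonalEqBot hof (by rw [hrange]; exact hbot), μ, fun n => ?_⟩
  rw [HilbertBasis.coe_mkOfOrthogonalEqBot]
  exact hμ n

theorem eigenvalues_tendsto {H : Type*} [NormedAddCommGroup H] [InnerProductSpace ℂ H]
    {G : Submodule ℂ (H × H)}
    (hc : IsCompact (closure {u : H | ∃ w, (u, w) ∈ G ∧ ‖u‖ ^ 2 + ‖w‖ ^ 2 ≤ 1}))
    {e : ℕ → H} (he : Orthonormal ℂ e) (μ : ℕ → ℝ) (h : ∀ n, (e n, (μ n : ℂ) • e n) ∈ G) :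
    Tendsto (fun n => |μ n|) atTop atTop := by
  rw [tendsto_atTop]
  intro C
  by_contra hcon
  rw [not_eventually] at hcon
  obtain ⟨φ, hφ, hφC⟩ := extraction_of_frequently_atTop hcon
  have hC : ∀ n, |μ (φ n)| ≤ C := fun n => (not_le.1 (hφC n)).le
  set t : ℝ := (Real.sqrt (1 + C ^ 2))⁻¹ with ht
  have hpos : 0 < 1 + C ^ 2 := by positivity
  have ht0 : 0 < t := by positivity
  have ht2 : t ^ 2 * (1 + C ^ 2) = 1 := by
    rw [ht, inv_pow, Real.sq_sqrt hpos.le, inv_mul_cancel₀ hpos.ne']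
  obtain ⟨a, -, ψ, hψ, hlim⟩ := hc.tendsto_subseq (x := fun n => (t : ℂ) • e (φ n)) (by
    intro n
    apply subset_closure
    refine ⟨_, G.smul_mem (t : ℂ) (h (φ n)), ?_⟩
    rw [norm_smul, norm_smul, norm_smul, he.1, Complex.norm_real, Complex.norm_real,
      Real.norm_of_nonneg ht0.le, Real.norm_eq_abs]
    have : |μ (φ n)| ^ 2 ≤ C ^ 2 := by
      have := hC n
      have := abs_nonneg (μ (φ n))
      gcongr
    nlinarith [sq_nonneg t])
  have hcau := hlim.cauchySeq
  rw [Metric.cauchySeq_iff'] at hcau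
  obtain ⟨N, hN⟩ := hcau t ht0
  have h1 := hN (N + 1) (Nat.le_succ N)
  have hneq : φ (ψ (N + 1)) ≠ φ (ψ N) := (hφ.comp hψ).injective.ne (Nat.succ_ne_self N)
  simp only [Function.comp_apply] at h1
  rw [dist_eq_norm, ← smul_sub, norm_smul, Complex.norm_real, Real.norm_of_nonneg ht0.le] at h1
  have h2 := orthonormal_dist_sq he hneq
  have h3 : ‖e (φ (ψ (N + 1))) - e (φ (ψ N))‖ < 1 := by
    by_contra! h4
    nlinarith
  nlinarith [norm_nonneg (e (φ (ψ (N + 1))) - e (φ (ψ N)))]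

theorem HilbertBasis.hasSum_norm_sq' {H : Type*} [NormedAddCommGroup H] [InnerProductSpace ℂ H]
    (e : HilbertBasis ℕ ℂ H) (x : H) : HasSum (fun n => ‖⟪e n, x⟫_ℂ‖ ^ 2) (‖x‖ ^ 2) := by
  have := e.hasSum_inner_mul_inner x x
  rw [inner_self_eq_norm_sq_to_K] at this
  have hfe : (fun n => ⟪x, e n⟫_ℂ * ⟪e n, x⟫_ℂ) =
      fun n => ((‖⟪e n, x⟫_ℂ‖ ^ 2 : ℝ) : ℂ) := by
    funext n
    rw [← inner_conj_symm x (e n), Complex.conj_mul']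
    push_cast
    rfl
  rw [hfe] at this
  have h2 := Complex.hasSum_re this
  simp only [Complex.ofReal_re] at h2
  convert h2 using 1
  norm_cast

theorem compact_of_basis {H : Type*} [NormedAddCommGroup H] [InnerProductSpace ℂ H]
    [CompleteSpace H] {G : Submodule ℂ (H × H)} (hG : SelfAdjRel G)
    (e : HilbertBasis ℕ ℂ H) (μ : ℕ → ℝ) (h : ∀ n, (e n, (μ n : ℂ) • e n) ∈ G)
    (hμ : Tendsto (fun n => |μ n|) atTop atTop) :
    IsCompact (closure {u : H | ∃ w, (u, w) ∈ G ∧ ‖u‖ ^ 2 + ‖w‖ ^ 2 ≤ 1}) := by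
  refine TotallyBounded.isCompact_of_isClosed (TotallyBounded.closure ?_) isClosed_closure
  rw [Metric.totallyBounded_iff]
  intro ε hε
  obtain ⟨N, hN⟩ := eventually_atTop.1 (hμ.eventually_ge_atTop (3 / ε))
  let F : (Fin N → ℂ) → H := fun c => ∑ i, c i • e i
  have hF : Continuous F := by fun_prop
  have hK : IsCompact (F '' Metric.closedBall 0 1) := (isCompact_closedBall _ _).image hF
  obtain ⟨t, htf, ht⟩ := Metric.totallyBounded_iff.1 hK.totallyBounded (ε / 2) (by positivity)
  refine ⟨t, htf, ?_⟩
  rintro u ⟨w, huw, hle⟩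
  have hu1 : ‖u‖ ≤ 1 := by
    by_contra! hlt
    nlinarith [sq_nonneg ‖w‖]
  have hw1 : ‖w‖ ≤ 1 := by
    by_contra! hlt
    nlinarith [sq_nonneg ‖u‖]
  let p : H := F fun i => ⟪e i, u⟫_ℂ
  have hp : p ∈ F '' Metric.closedBall 0 1 := by
    refine ⟨_, ?_, rfl⟩
    rw [mem_closedBall_zero_iff, pi_norm_le_iff_of_nonneg zero_le_one]
    intro i
    refine (norm_inner_le_norm _ _).trans ?_
    rw [e.orthonormal.1, one_mul]
    exact hu1
  have hcoef : ∀ n, ⟪e n, p⟫_ℂ = if n < N then ⟪e n, u⟫_ℂ else 0 := by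
    intro n
    simp only [p, F, inner_sum, inner_smul_right, orthonormal_iff_ite.1 e.orthonormal]
    split_ifs with hn
    · rw [Finset.sum_eq_single ⟨n, hn⟩]
      · simp
      · intro b _ hb
        have : n ≠ b := fun hh => hb (Fin.ext hh.symm)
        simp [this]
      · simp
    · refine Finset.sum_eq_zero fun b _ => ?_
      have : n ≠ b := fun hh => hn (hh ▸ b.2)
      simp [this]
  have hdist : ‖u - p‖ ^ 2 ≤ (ε / 3) ^ 2 * ‖w‖ ^ 2 := by
    refine hasSum_le ?_ (e.hasSum_norm_sq' (u - p)) ((e.hasSum_norm_sq' w).mul_left ((ε / 3) ^ 2))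
    intro n
    rw [inner_sub_right, hcoef]
    split_ifs with hn
    · rw [sub_self, norm_zero, zero_pow two_ne_zero]
      positivity
    · have h1 := hG.sym (h n) huw
      rw [inner_smul_left, Complex.conj_ofReal] at h1
      rw [← h1, sub_zero, norm_mul, Complex.norm_real, Real.norm_eq_abs, ← mul_pow]
      have h2 := hN n (not_lt.1 hn)
      rw [div_le_iff₀ hε] at h2
      refine pow_le_pow_left₀ (norm_nonneg _) ?_ 2
      nlinarith [norm_nonneg ⟪e n, u⟫_ℂ]
  have hd : ‖u - p‖ < ε / 2 := by
    have : ‖u - p‖ ≤ ε / 3 := by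
      refine (pow_le_pow_iff_left₀ (norm_nonneg _) (by positivity) two_ne_zero).1 ?_
      refine hdist.trans ?_
      nlinarith [sq_nonneg (ε / 3), norm_nonneg w]
    linarith
  obtain ⟨y, hy, hpy⟩ := Set.mem_iUnion₂.1 (ht hp)
  refine Set.mem_iUnion₂.2 ⟨y, hy, ?_⟩
  rw [Metric.mem_ball] at hpy ⊢
  calc dist u y ≤ dist u p + dist p y := dist_triangle _ _ _
    _ < ε / 2 + ε / 2 := by rw [dist_eq_norm]; linarith
    _ = ε := by ring

/-- For a self-adjoint densely defined operator `D` on an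
infinite-dimensional separable complex Hilbert space `H`, the following are equivalent:
(i) there is a Hilbert basis of eigenvectors of `D` whose eigenvalues `μₙ` satisfy
`|μₙ| → ∞`; (ii) the set `{ u ∈ dom D : ‖u‖² + ‖Du‖² ≤ 1 }` is relatively compact in `H`. -/
theorem statement3 {H : Type*} [NormedAddCommGroup H] [InnerProductSpace ℂ H]
    [CompleteSpace H] [TopologicalSpace.SeparableSpace H]
    (hinf : ¬ FiniteDimensional ℂ H)
    (D : H →ₗ.[ℂ] H) (hdense : Dense (D.domain : Set H))
    (hsa : D.adjoint = D) :
    (∃ (e : HilbertBasis ℕ ℂ H) (μ : ℕ → ℝ) (he : ∀ n : ℕ, e n ∈ D.domain),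
        (∀ n : ℕ, D ⟨e n, he n⟩ = (μ n : ℂ) • e n) ∧
        Tendsto (fun n => |μ n|) atTop atTop) ↔
      IsCompact (closure {u : H | ∃ hu : u ∈ D.domain, ‖u‖ ^ 2 + ‖D ⟨u, hu⟩‖ ^ 2 ≤ 1}) := by
  have hG : SelfAdjRel D.graph := by
    intro u w
    constructor
    · intro huw v z hvz
      obtain ⟨x, rfl, rfl⟩ := (LinearPMap.mem_graph_iff D).1 huw
      obtain ⟨y, rfl, rfl⟩ := (LinearPMap.mem_graph_iff D).1 hvz
      have hf := LinearPMap.adjoint_isFormalAdjoint hdense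
      rw [hsa] at hf
      exact hf x y
    · intro huw
      have hw : ∀ x : D.domain, ⟪w, (x : H)⟫_ℂ = ⟪u, D x⟫_ℂ := fun x => huw x (D x) (D.mem_graph x)
      have hu : u ∈ D.adjoint.domain := LinearPMap.mem_adjoint_domain_of_exists u ⟨w, hw⟩
      have hval : D.adjoint ⟨u, hu⟩ = w := LinearPMap.adjoint_apply_eq hdense ⟨u, hu⟩ hw
      have : (u, D.adjoint ⟨u, hu⟩) ∈ D.adjoint.graph := D.adjoint.mem_graph ⟨u, hu⟩
      rw [hval] at this
      rwa [hsa] at this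
  have hfun : ∀ x, ((0 : H), x) ∈ D.graph → x = 0 := fun x hx =>
    D.graph_fst_eq_zero_snd hx rfl
  have hset : {u : H | ∃ hu : u ∈ D.domain, ‖u‖ ^ 2 + ‖D ⟨u, hu⟩‖ ^ 2 ≤ 1} =
      {u : H | ∃ w, (u, w) ∈ D.graph ∧ ‖u‖ ^ 2 + ‖w‖ ^ 2 ≤ 1} := by
    ext u
    constructor
    · rintro ⟨hu, hle⟩
      exact ⟨_, D.mem_graph ⟨u, hu⟩, hle⟩
    · rintro ⟨w, huw, hle⟩
      obtain ⟨x, rfl, rfl⟩ := (LinearPMap.mem_graph_iff D).1 huw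
      exact ⟨x.2, hle⟩
  rw [hset]
  constructor
  · rintro ⟨e, μ, he, heq, hμ⟩
    refine compact_of_basis hG e μ (fun n => ?_) hμ
    rw [← heq n]
    exact D.mem_graph ⟨e n, he n⟩
  · intro hc
    obtain ⟨e, μ, heμ⟩ := hG.exists_basis hinf hc hfun
    have hdom : ∀ n, e n ∈ D.domain := fun n => LinearPMap.mem_domain_of_mem_graph (heμ n)
    refine ⟨e, μ, hdom, fun n => ?_, eigenvalues_tendsto hc e.orthonormal μ heμ⟩
    exact (LinearPMap.mem_graph_snd_inj D (heμ n) (D.mem_graph ⟨e n, hdom n⟩) rfl).symm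
end

section
/- Let κ, s ∈ ℝ, ε ∈ {1,−1} and 0 < a < b, and let u₀, u₁ : ℝ × (0,b) → ℂ be smooth functions such that: (1) ∂_t u₀(t,ρ) = i(−∂_ρ u₁ − κρ^{−1}u₁ + εsρ u₁)(t,ρ) and ∂_t u₁(t,ρ) = i(∂_ρ u₀ − κρ^{−1}u₀ + εsρ u₀)(t,ρ) for all (t,ρ) ∈ ℝ × (0,b); (2) for every t ∈ ℝ, u₀(t,ρ)·conj(u₁(t,ρ)) → 0 as ρ → 0⁺; (3) for every compact interval I ⊂ ℝ there is a Lebesgue-integrable function g on (0,a) such that |u₀(t,ρ)|² + |u₁(t,ρ)|² ≤ g(ρ) and |∂_t(|u₀|² + |u₁|²)(t,ρ)| ≤ g(ρ) for all t ∈ I and ρ ∈ (0,a); (4) u₀(0,ρ) = u₁(0,ρ) = 0 for all ρ ∈ (0,a). Then u₀(t,ρ) = u₁(t,ρ) = 0 whenever |t| ≤ a and 0 < ρ < a − |t|. (Finite propagation speed, away from the cone tip, for the wave equation ∂_t u = iD u of the perturbed operator D = d + δ with d = ∂_ρ − κρ^{−1} + εsρ and δ = −∂_ρ − κρ^{−1}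 + εsρ.) -/
open MeasureTheory Set Complex Filter

lemma posSq_hasDerivAt (x : ℝ) : HasDerivAt (fun y : ℝ => (max y 0) ^ 2) (2 * max x 0) x := by
  rcases lt_trichotomy x 0 with h | h | h
  · rw [max_eq_right h.le, mul_zero]
    refine (hasDerivAt_const x (0:ℝ)).congr_of_eventuallyEq ?_
    filter_upwards [Iio_mem_nhds h] with y hy
    simp [max_eq_right (le_of_lt (mem_Iio.1 hy))]
  · subst h
    rw [hasDerivAt_iff_isLittleO]
    simp only [max_self, mul_zero, smul_zero, sub_zero, ne_eq, OfNat.ofNat_ne_zero,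
      not_false_eq_true, zero_pow]
    have h1 : (fun y : ℝ => (max y 0) ^ 2) =O[nhds 0] (fun y : ℝ => y ^ 2) := by
      refine Asymptotics.IsBigO.of_bound 1 (Eventually.of_forall fun y => ?_)
      rw [one_mul, norm_pow, norm_pow]
      gcongr
      rcases le_total y 0 with h | h <;> simp [h]
    exact h1.trans_isLittleO (by simpa using Asymptotics.isLittleO_pow_id (𝕜 := ℝ) (n := 2) (by norm_num))
  · rw [max_eq_left h.le]
    refine HasDerivAt.congr_of_eventuallyEq (f := fun y : ℝ => y ^ 2) ?_ ?_
    · simpa using hasDerivAt_pow 2 x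
    · filter_upwards [Ioi_mem_nhds h] with y hy
      simp [max_eq_left (le_of_lt (mem_Ioi.1 hy))]

lemma cut_hasDerivAt (c x : ℝ) :
    HasDerivAt (fun y : ℝ => (max (c - y) 0) ^ 2) (-(2 * max (c - x) 0)) x := by
  have h := (posSq_hasDerivAt (c - x)).comp x ((hasDerivAt_id x).const_sub c)
  simpa [Function.comp_def] using h

lemma energy_core (a b : ℝ) (ha : 0 < a) (hab : a < b) (e F D : ℝ → ℝ → ℝ)
    (h1 : ∀ t, ∀ ρ ∈ Ioo (0:ℝ) b, HasDerivAt (fun t' => e t' ρ) (D t ρ) t)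
    (h2 : ∀ t, ∀ ρ ∈ Ioo (0:ℝ) b, HasDerivAt (F t) (D t ρ) ρ)
    (hF : ∀ t ρ, |F t ρ| ≤ e t ρ)
    (hc : ∀ t, ContinuousOn (e t) (Ioo 0 b))
    (hbd : ∀ t, Tendsto (F t) (nhdsWithin 0 (Ioi 0)) (nhds 0))
    (hdom : ∀ t₁ t₂ : ℝ, ∃ g : ℝ → ℝ, IntegrableOn g (Ioo 0 a) ∧
      ∀ t ∈ Icc t₁ t₂, ∀ ρ ∈ Ioo (0:ℝ) a, e t ρ ≤ g ρ ∧ |D t ρ| ≤ g ρ)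
    (hinit : ∀ ρ ∈ Ioo (0:ℝ) a, e 0 ρ = 0) :
    ∀ t, 0 ≤ t → ∀ ρ, 0 < ρ → ρ < a - t → e t ρ = 0 := by
  have hsub : Ioo (0:ℝ) a ⊆ Ioo 0 b := Ioo_subset_Ioo_right hab.le
  have he : ∀ t ρ, 0 ≤ e t ρ := fun t ρ => (abs_nonneg _).trans (hF t ρ)
  have hms : MeasurableSet (Ioo (0:ℝ) a) := measurableSet_Ioo
  have hme : ∀ t, AEStronglyMeasurable (e t) (volume.restrict (Ioo 0 a)) := fun t =>
    ((hc t).mono hsub).aestronglyMeasurable hms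
  have hmD : ∀ t, AEStronglyMeasurable (D t) (volume.restrict (Ioo 0 a)) := fun t => by
    refine (measurable_deriv (F t)).aestronglyMeasurable.congr ?_
    filter_upwards [ae_restrict_mem hms] with ρ hρ using (h2 t ρ (hsub hρ)).deriv
  have hmF : ∀ t, AEStronglyMeasurable (F t) (volume.restrict (Ioo 0 a)) := fun t =>
    ContinuousOn.aestronglyMeasurable
      (fun ρ hρ => (h2 t ρ (hsub hρ)).continuousAt.continuousWithinAt) hms
  have hp1 : ∀ t, Continuous (fun ρ : ℝ => (max (a - (t + ρ)) 0) ^ 2) := fun t => by fun_prop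
  have hp2 : ∀ t, Continuous (fun ρ : ℝ => -(2 * max (a - (t + ρ)) 0)) := fun t => by fun_prop
  -- bound for the cutoff
  have hmax : ∀ T t ρ : ℝ, |t| ≤ T → 0 < ρ → |max (a - (t + ρ)) 0| ≤ a + T := by
    intro T t ρ ht hρ
    have := abs_le.1 ht
    have h0 := abs_nonneg t
    rw [abs_of_nonneg (le_max_right _ _)]
    exact max_le (by linarith) (by linarith)
  set G : ℝ → ℝ → ℝ := fun t ρ => (max (a - (t + ρ)) 0) ^ 2 * e t ρ with hG
  set G' : ℝ → ℝ → ℝ := fun t ρ =>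
    -(2 * max (a - (t + ρ)) 0) * e t ρ + (max (a - (t + ρ)) 0) ^ 2 * D t ρ with hG'
  have hmG : ∀ t, AEStronglyMeasurable (G t) (volume.restrict (Ioo 0 a)) := fun t =>
    (hp1 t).aestronglyMeasurable.mul (hme t)
  have hmG' : ∀ t, AEStronglyMeasurable (G' t) (volume.restrict (Ioo 0 a)) := fun t =>
    ((hp2 t).aestronglyMeasurable.mul (hme t)).add ((hp1 t).aestronglyMeasurable.mul (hmD t))
  have hie : ∀ t, IntegrableOn (e t) (Ioo 0 a) := fun t => by
    obtain ⟨g, hg, hb⟩ := hdom t t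
    refine Integrable.mono' hg (hme t) ?_
    filter_upwards [ae_restrict_mem hms] with ρ hρ
    rw [Real.norm_eq_abs, abs_of_nonneg (he _ _)]
    exact (hb t ⟨le_rfl, le_rfl⟩ ρ hρ).1
  have hiD : ∀ t, IntegrableOn (D t) (Ioo 0 a) := fun t => by
    obtain ⟨g, hg, hb⟩ := hdom t t
    refine Integrable.mono' hg (hmD t) ?_
    filter_upwards [ae_restrict_mem hms] with ρ hρ
    exact (hb t ⟨le_rfl, le_rfl⟩ ρ hρ).2
  have hiF : ∀ t, IntegrableOn (F t) (Ioo 0 a) := fun t =>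
    Integrable.mono' (hie t) (hmF t) (Eventually.of_forall fun ρ => hF t ρ)
  have bdd1 : ∀ t, ∀ᵐ ρ ∂(volume.restrict (Ioo 0 a)),
      ‖(max (a - (t + ρ)) 0) ^ 2‖ ≤ (a + |t|) ^ 2 := fun t => by
    filter_upwards [ae_restrict_mem hms] with ρ hρ
    rw [norm_pow]
    have := hmax |t| t ρ le_rfl hρ.1
    gcongr
    exact this
  have bdd2 : ∀ t, ∀ᵐ ρ ∂(volume.restrict (Ioo 0 a)),
      ‖-(2 * max (a - (t + ρ)) 0)‖ ≤ 2 * (a + |t|) := fun t => by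
    filter_upwards [ae_restrict_mem hms] with ρ hρ
    have := hmax |t| t ρ le_rfl hρ.1
    rw [norm_neg, norm_mul, Real.norm_eq_abs, Real.norm_eq_abs, abs_two]
    linarith
  have hiG : ∀ t, IntegrableOn (G t) (Ioo 0 a) := fun t =>
    (hie t).bdd_mul (hp1 t).aestronglyMeasurable (bdd1 t)
  have hi1 : ∀ t, IntegrableOn (fun ρ => -(2 * max (a - (t + ρ)) 0) * e t ρ) (Ioo 0 a) :=
    fun t => (hie t).bdd_mul (hp2 t).aestronglyMeasurable (bdd2 t)
  have hi2 : ∀ t, IntegrableOn (fun ρ => (max (a - (t + ρ)) 0) ^ 2 * D t ρ) (Ioo 0 a) :=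
    fun t => (hiD t).bdd_mul (hp1 t).aestronglyMeasurable (bdd1 t)
  have hi3 : ∀ t, IntegrableOn (fun ρ => -(2 * max (a - (t + ρ)) 0) * F t ρ) (Ioo 0 a) :=
    fun t => (hiF t).bdd_mul (hp2 t).aestronglyMeasurable (bdd2 t)
  -- derivative of the energy
  have hE : ∀ t, HasDerivAt (fun t => ∫ ρ in Ioo 0 a, G t ρ) (∫ ρ in Ioo 0 a, G' t ρ) t := by
    intro t
    obtain ⟨g, hg, hb⟩ := hdom (t - 1) (t + 1)
    have hgC : IntegrableOn (fun ρ => (2 * (a + (|t| + 1)) + (a + (|t| + 1)) ^ 2) * g ρ)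
        (Ioo 0 a) := hg.const_mul _
    refine (hasDerivAt_integral_of_dominated_loc_of_deriv_le (Metric.ball_mem_nhds t one_pos)
      (Eventually.of_forall hmG) (hiG t) (hmG' t) ?_ hgC ?_).2
    · filter_upwards [ae_restrict_mem hms] with ρ hρ x hx
      rw [Metric.mem_ball, Real.dist_eq, abs_lt] at hx
      have hx1 : |x| ≤ |t| + 1 := by
        have : |x| ≤ |t| + |x - t| := by
          have := abs_add_le t (x - t); simpa using this
        have h' : |x - t| ≤ 1 := abs_le.2 ⟨hx.1.le, hx.2.le⟩
        linarith
      have hm := hmax _ x ρ hx1 hρ.1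
      obtain ⟨hb1, hb2⟩ := hb x ⟨by linarith, by linarith⟩ ρ hρ
      have hg0 := (he x ρ).trans hb1
      have hA : 0 ≤ a + (|t| + 1) := by positivity
      calc ‖G' x ρ‖ ≤ ‖-(2 * max (a - (x + ρ)) 0) * e x ρ‖
              + ‖(max (a - (x + ρ)) 0) ^ 2 * D x ρ‖ := norm_add_le _ _
        _ = 2 * |max (a - (x + ρ)) 0| * e x ρ + |max (a - (x + ρ)) 0| ^ 2 * |D x ρ| := by
            simp only [norm_mul, norm_neg, norm_pow, Real.norm_eq_abs, abs_two,
              abs_of_nonneg (he x ρ)]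
        _ ≤ 2 * (a + (|t| + 1)) * g ρ + (a + (|t| + 1)) ^ 2 * g ρ := by
            have := he x ρ
            gcongr
        _ = _ := by ring
    · filter_upwards [ae_restrict_mem hms] with ρ hρ x hx
      have hcut : HasDerivAt (fun t : ℝ => (max (a - (t + ρ)) 0) ^ 2)
          (-(2 * max (a - (x + ρ)) 0)) x := by
        have := (cut_hasDerivAt a (x + ρ)).comp x ((hasDerivAt_id x).add_const ρ)
        simpa [Function.comp_def] using this
      exact hcut.mul (h1 x ρ (hsub hρ))
  -- integration by parts
  have hparts : ∀ t, 0 ≤ t → ∫ ρ in Ioo 0 a,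
      (-(2 * max (a - (t + ρ)) 0) * F t ρ + (max (a - (t + ρ)) 0) ^ 2 * D t ρ) = 0 := by
    intro t ht
    have hcut : ∀ x, HasDerivAt (fun ρ : ℝ => (max (a - (t + ρ)) 0) ^ 2)
          (-(2 * max (a - (t + x)) 0)) x := fun x => by
      have := (cut_hasDerivAt a (t + x)).comp x ((hasDerivAt_id x).const_add t)
      simpa [Function.comp_def] using this
    have key := intervalIntegral.integral_eq_sub_of_hasDerivAt_of_tendsto (a := 0) (b := a) ha
      (f := fun ρ => (max (a - (t + ρ)) 0) ^ 2 * F t ρ)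
      (f' := fun ρ => -(2 * max (a - (t + ρ)) 0) * F t ρ + (max (a - (t + ρ)) 0) ^ 2 * D t ρ)
      (fa := 0) (fb := 0)
      (fun x hx => (hcut x).mul (h2 t x (hsub hx)))
      ((intervalIntegrable_iff_integrableOn_Ioo_of_le ha.le).2 ((hi3 t).add (hi2 t)))
      (by
        have := ((hp1 t).tendsto 0).mono_left (nhdsWithin_le_nhds (s := Ioi 0)) |>.mul (hbd t)
        simpa using this)
      (by
        have h3 : ContinuousAt (F t) a := (h2 t a ⟨ha, hab⟩).continuousAt
        have := (((hp1 t).tendsto a).mul h3).mono_left (nhdsWithin_le_nhds (s := Iio a))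
        have hz : max (a - (t + a)) 0 = 0 := max_eq_right (by linarith)
        simpa only [hz, ne_eq, OfNat.ofNat_ne_zero, not_false_eq_true, zero_pow, zero_mul]
          using this)
    rw [intervalIntegral.integral_of_le ha.le, integral_Ioc_eq_integral_Ioo] at key
    simpa using key
  have hneg : ∀ t, 0 ≤ t → ∫ ρ in Ioo 0 a, G' t ρ ≤ 0 := by
    intro t ht
    refine le_trans ?_ (hparts t ht).le
    refine integral_mono ((hi1 t).add (hi2 t)) ((hi3 t).add (hi2 t)) fun ρ => ?_
    have h3 := le_of_abs_le (hF t ρ)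
    have h4 : 0 ≤ max (a - (t + ρ)) 0 := le_max_right _ _
    simp only [Pi.add_apply]
    nlinarith
  have hanti : AntitoneOn (fun t => ∫ ρ in Ioo 0 a, G t ρ) (Ici 0) := by
    refine antitoneOn_of_deriv_nonpos (convex_Ici 0)
      (fun t _ => (hE t).continuousAt.continuousWithinAt)
      (fun t _ => (hE t).differentiableAt.differentiableWithinAt) fun t ht => ?_
    rw [interior_Ici] at ht
    rw [(hE t).deriv]
    exact hneg t (le_of_lt ht)
  intro t ht ρ hρ hρt
  have hG0 : ∀ t ρ, 0 ≤ G t ρ := fun t ρ => mul_nonneg (sq_nonneg _) (he t ρ)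
  have hE0 : ∫ ρ in Ioo 0 a, G 0 ρ = 0 := by
    refine setIntegral_eq_zero_of_forall_eq_zero fun x hx => ?_
    simp [hG, hinit x hx]
  have hEt : ∫ ρ in Ioo 0 a, G t ρ = 0 :=
    le_antisymm ((hanti (self_mem_Ici) (mem_Ici.2 ht) ht).trans hE0.le)
      (integral_nonneg (hG0 t))
  have hae := (integral_eq_zero_iff_of_nonneg (hG0 t) (hiG t)).1 hEt
  have hzero := Measure.eqOn_open_of_ae_eq hae isOpen_Ioo
    ((hp1 t).continuousOn.mul ((hc t).mono hsub)) continuousOn_const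
  have hz : G t ρ = 0 := hzero ⟨hρ, by linarith⟩
  have hpos : 0 < max (a - (t + ρ)) 0 := lt_max_of_lt_left (by linarith)
  rcases mul_eq_zero.1 hz with h | h
  · exact absurd h (by positivity)
  · exact h

lemma re_deriv {f : ℝ → ℂ} {f' : ℂ} {x : ℝ} (h : HasDerivAt f f' x) :
    HasDerivAt (fun y => (f y).re) f'.re x :=
  Complex.reCLM.hasFDerivAt.comp_hasDerivAt x h

lemma im_deriv {f : ℝ → ℂ} {f' : ℂ} {x : ℝ} (h : HasDerivAt f f' x) :
    HasDerivAt (fun y => (f y).im) f'.im x :=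
  Complex.imCLM.hasFDerivAt.comp_hasDerivAt x h

lemma partial_diff {u : ℝ → ℝ → ℂ} {b : ℝ}
    (hu : ContDiffOn ℝ (⊤ : ℕ∞) (fun p : ℝ × ℝ => u p.1 p.2) (univ ×ˢ Ioo 0 b))
    (t ρ : ℝ) (hρ : ρ ∈ Ioo (0:ℝ) b) :
    DifferentiableAt ℝ (fun t' => u t' ρ) t ∧ DifferentiableAt ℝ (fun ρ' => u t ρ') ρ := by
  have h : DifferentiableAt ℝ (fun p : ℝ × ℝ => u p.1 p.2) (t, ρ) :=
    (hu.contDiffAt ((isOpen_univ.prod isOpen_Ioo).mem_nhds ⟨mem_univ _, hρ⟩)).differentiableAt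
      (by simp)
  constructor
  · exact DifferentiableAt.comp t (f := fun t' : ℝ => (t', ρ)) h (by fun_prop)
  · exact DifferentiableAt.comp ρ (f := fun ρ' : ℝ => (t, ρ')) h (by fun_prop)

/-- Finite propagation speed, away from the cone tip, for the wave equation
`∂ₜu = iDu` of the perturbed operator `D = d + δ` with `d = ∂ρ - κρ⁻¹ + εsρ` and
`δ = -∂ρ - κρ⁻¹ + εsρ`: under the stated decay/integrability/boundary conditions, if the
initial data vanishes on `(0,a)` then the solution vanishes on `(0, a - |t|)` for `|t| ≤ a`. -/
theorem statement17 (κ s : ℝ) (ε : ℝ) (hε : ε = 1 ∨ ε = -1)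
    (a b : ℝ) (ha : 0 < a) (hab : a < b)
    (u₀ u₁ : ℝ → ℝ → ℂ)
    (hu₀ : ContDiffOn ℝ (⊤ : ℕ∞) (fun p : ℝ × ℝ => u₀ p.1 p.2)
      (Set.univ ×ˢ Set.Ioo 0 b))
    (hu₁ : ContDiffOn ℝ (⊤ : ℕ∞) (fun p : ℝ × ℝ => u₁ p.1 p.2)
      (Set.univ ×ˢ Set.Ioo 0 b))
    -- (1) the wave equation on ℝ × (0,b)
    (heq₀ : ∀ t : ℝ, ∀ ρ ∈ Set.Ioo (0:ℝ) b,
      deriv (fun t' => u₀ t' ρ) t =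
        Complex.I * (-(deriv (fun ρ' => u₁ t ρ') ρ) - (κ / ρ : ℝ) * u₁ t ρ
          + (ε * s * ρ : ℝ) * u₁ t ρ))
    (heq₁ : ∀ t : ℝ, ∀ ρ ∈ Set.Ioo (0:ℝ) b,
      deriv (fun t' => u₁ t' ρ) t =
        Complex.I * (deriv (fun ρ' => u₀ t ρ') ρ - (κ / ρ : ℝ) * u₀ t ρ
          + (ε * s * ρ : ℝ) * u₀ t ρ))
    -- (2) boundary condition at the tip
    (hbd : ∀ t : ℝ,
      Tendsto (fun ρ => u₀ t ρ * (starRingEnd ℂ) (u₁ t ρ)) (nhdsWithin 0 (Set.Ioi 0))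
        (nhds 0))
    -- (3) local domination by an integrable function, on every compact time interval
    (hdom : ∀ t₁ t₂ : ℝ, ∃ g : ℝ → ℝ,
      IntegrableOn g (Set.Ioo 0 a) ∧
      ∀ t ∈ Set.Icc t₁ t₂, ∀ ρ ∈ Set.Ioo (0:ℝ) a,
        ‖u₀ t ρ‖ ^ 2 + ‖u₁ t ρ‖ ^ 2 ≤ g ρ ∧
        |deriv (fun t' => ‖u₀ t' ρ‖ ^ 2 + ‖u₁ t' ρ‖ ^ 2) t| ≤ g ρ)
    -- (4) vanishing initial data on (0,a)
    (hinit : ∀ ρ ∈ Set.Ioo (0:ℝ) a, u₀ 0 ρ = 0 ∧ u₁ 0 ρ = 0) :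
    ∀ t : ℝ, |t| ≤ a → ∀ ρ : ℝ, 0 < ρ → ρ < a - |t| → u₀ t ρ = 0 ∧ u₁ t ρ = 0 := by
  set e : ℝ → ℝ → ℝ := fun t ρ => ‖u₀ t ρ‖ ^ 2 + ‖u₁ t ρ‖ ^ 2 with he
  set F : ℝ → ℝ → ℝ := fun t ρ => -2 * (u₀ t ρ * (starRingEnd ℂ) (u₁ t ρ)).im with hFdef
  have he' : ∀ t ρ, e t ρ = (u₀ t ρ).re ^ 2 + (u₀ t ρ).im ^ 2
      + ((u₁ t ρ).re ^ 2 + (u₁ t ρ).im ^ 2) := fun t ρ => by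
    simp only [he, Complex.sq_norm, Complex.normSq_apply]; ring
  have hF' : ∀ t ρ, F t ρ = -2 * ((u₀ t ρ).im * (u₁ t ρ).re - (u₀ t ρ).re * (u₁ t ρ).im) :=
    fun t ρ => by simp [hFdef]; ring
  have hFe : ∀ t ρ, |F t ρ| ≤ e t ρ := fun t ρ => by
    rw [he', hF', abs_le]
    constructor
    · nlinarith [sq_nonneg ((u₀ t ρ).im - (u₁ t ρ).re), sq_nonneg ((u₀ t ρ).re + (u₁ t ρ).im)]
    · nlinarith [sq_nonneg ((u₀ t ρ).im + (u₁ t ρ).re), sq_nonneg ((u₀ t ρ).re - (u₁ t ρ).im)]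
  set D : ℝ → ℝ → ℝ := fun t ρ => deriv (fun t' => e t' ρ) t with hD
  have hboth : ∀ t, ∀ ρ ∈ Ioo (0:ℝ) b,
      HasDerivAt (fun t' => e t' ρ) (D t ρ) t ∧ HasDerivAt (F t) (D t ρ) ρ := by
    intro t ρ hρ
    have t0 := (partial_diff hu₀ t ρ hρ).1.hasDerivAt
    have t1 := (partial_diff hu₁ t ρ hρ).1.hasDerivAt
    have r0 := (partial_diff hu₀ t ρ hρ).2.hasDerivAt
    have r1 := (partial_diff hu₁ t ρ hρ).2.hasDerivAt
    rw [heq₀ t ρ hρ] at t0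
    rw [heq₁ t ρ hρ] at t1
    generalize deriv (fun ρ' => u₀ t ρ') ρ = p at *
    generalize deriv (fun ρ' => u₁ t ρ') ρ = q at *
    have hd1 := (((re_deriv t0).pow 2).add ((im_deriv t0).pow 2)).add
      (((re_deriv t1).pow 2).add ((im_deriv t1).pow 2))
    have hd2 := (((im_deriv r0).mul (re_deriv r1)).sub
      ((re_deriv r0).mul (im_deriv r1))).const_mul (-2)
    have hd1' := hd1.congr_of_eventuallyEq (f₁ := fun t' => e t' ρ)
      (Eventually.of_forall fun t' => by simp [he'])
    have hd2' := hd2.congr_of_eventuallyEq (f₁ := F t)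
      (Eventually.of_forall fun t' => by simp [hF'])
    refine ⟨hd1'.differentiableAt.hasDerivAt, ?_⟩
    have hDe : D t ρ = _ := hd1'.deriv
    rw [hDe]
    refine hd2'.congr_deriv (Eq.symm ?_)
    simp only [Complex.mul_re, Complex.mul_im, Complex.I_re, Complex.I_im, Complex.add_re,
      Complex.add_im, Complex.sub_re, Complex.sub_im, Complex.neg_re, Complex.neg_im,
      Complex.ofReal_re, Complex.ofReal_im]
    push_cast
    ring
  have hc : ∀ t, ContinuousOn (e t) (Ioo 0 b) := fun t ρ hρ => by
    have r0 := (partial_diff hu₀ t ρ hρ).2.continuousAt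
    have r1 := (partial_diff hu₁ t ρ hρ).2.continuousAt
    exact ((r0.norm.pow 2).add (r1.norm.pow 2)).continuousWithinAt
  have hbF : ∀ t, Tendsto (F t) (nhdsWithin 0 (Ioi 0)) (nhds 0) := fun t => by
    have := ((Complex.continuous_im.tendsto 0).comp (hbd t)).const_mul (-2)
    simpa only [Function.comp_def, Complex.zero_im, mul_zero] using this
  have hi : ∀ ρ ∈ Ioo (0:ℝ) a, e 0 ρ = 0 := fun ρ hρ => by
    simp [he, hinit ρ hρ]
  have hconc : ∀ t ρ, e t ρ = 0 → u₀ t ρ = 0 ∧ u₁ t ρ = 0 := fun t ρ h => by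
    have h0 := sq_nonneg ‖u₀ t ρ‖
    have h1 := sq_nonneg ‖u₁ t ρ‖
    simp only [he] at h
    constructor
    · exact norm_eq_zero.1 (pow_eq_zero_iff two_ne_zero |>.1 (by linarith))
    · exact norm_eq_zero.1 (pow_eq_zero_iff two_ne_zero |>.1 (by linarith))
  intro t _ ρ hρ hρt
  apply hconc
  rcases le_total 0 t with ht | ht
  · rw [abs_of_nonneg ht] at hρt
    exact energy_core a b ha hab e F D (fun t ρ hρ => (hboth t ρ hρ).1)
      (fun t ρ hρ => (hboth t ρ hρ).2) hFe hc hbF hdom hi t ht ρ hρ hρt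
  · rw [abs_of_nonpos ht] at hρt
    have := energy_core a b ha hab (fun t => e (-t)) (fun t ρ => -F (-t) ρ) (fun t ρ => -D (-t) ρ)
      (fun t ρ hρ => by
        have := (hboth (-t) ρ hρ).1.comp t (hasDerivAt_neg t)
        simpa [Function.comp_def] using this)
      (fun t ρ hρ => (hboth (-t) ρ hρ).2.neg) (fun t ρ => by rw [abs_neg]; exact hFe _ _)
      (fun t => hc _) (fun t => by simpa using (hbF (-t)).neg)
      (fun t₁ t₂ => by
        obtain ⟨g, hg, hb⟩ := hdom (-t₂) (-t₁)
        refine ⟨g, hg, fun t ht ρ hρ => ?_⟩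
        rw [abs_neg]
        exact hb (-t) ⟨by linarith [ht.2], by linarith [ht.1]⟩ ρ hρ)
      (fun ρ hρ => by simpa using hi ρ hρ) (-t) (by linarith) ρ hρ hρt
    simpa using this
end
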